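/- arXiv:2202.02402 — 3 statements merged into one kernel-verified Lean document; each statement's English description precedes it below -/
import Mathlib

section
/- Let Ω ⊆ ℂ be a domain and K : Ω × Ω → ℂ a sesqui-analytic non-negative definite kernel. Then the function G_{K⁻¹}(z,w) := K(z,w)·∂∂̄K(z,w) − ∂K(z,w)·∂̄K(z,w) is a non-negative definite kernel on Ω, where ∂ denotes differentiation in z and ∂̄ denotes differentiation in the conjugate of w. -/
open scoped ComplexOrder

local notation "conj'" => (starRingEnd ℂ)

/-- `K` is a non-negative definite kernel on the set `s`. -/
def IsNNDOn (s : Set ℂ) (K : ℂ → ℂ → ℂ) : Prop :=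
  ∀ (p : ℕ) (x : Fin p → ℂ), (∀ i, x i ∈ s) →
    Matrix.PosSemidef (Matrix.of fun i j : Fin p => K (x i) (x j))

/-- `K` is sesqui-analytic on `s`: holomorphic in the first variable and
anti-holomorphic in the second. -/
def Sesq (s : Set ℂ) (K : ℂ → ℂ → ℂ) : Prop :=
  (∀ w ∈ s, AnalyticOnNhd ℂ (fun z => K z w) s) ∧
    (∀ z ∈ s, AnalyticOnNhd ℂ (fun w => conj' (K z w)) s)

/-- `∂`, the derivative in the first (holomorphic) variable. -/
noncomputable def D (K : ℂ → ℂ → ℂ) (z w : ℂ) : ℂ := deriv (fun u => K u w) z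

/-- `∂̄`, the derivative in the conjugate of the second (anti-holomorphic) variable. -/
noncomputable def Db (K : ℂ → ℂ → ℂ) (z w : ℂ) : ℂ :=
  conj' (deriv (fun u => conj' (K z u)) w)


open Real Metric Set Filter Topology MeasureTheory in
lemma aux_circ {g : ℂ → ℂ} {z : ℂ} {r : ℝ} (hr : 0 < r)
    (hg : AnalyticOnNhd ℂ g (closedBall z r)) :
    Real.posLog ‖g z‖ ≤ circleAverage (fun x => Real.posLog ‖g x‖) z r := by
  have habs : |r| = r := abs_of_pos hr
  have hms : MeromorphicOn g (sphere z |r|) := fun x hx =>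
    (hg x (by rw [habs] at hx; exact sphere_subset_closedBall hx)).meromorphicAt
  have hI1 : CircleIntegrable (fun x => Real.posLog ‖g x‖) z r := hms.circleIntegrable_posLog_norm
  have hI2 : CircleIntegrable (fun x => Real.log ‖g x‖) z r := hms.circleIntegrable_log_norm
  rw [Real.posLog_apply]
  apply max_le
  · exact circleAverage_nonneg_of_nonneg fun x _ => Real.posLog_nonneg
  · by_cases h0 : g z = 0
    · simp only [h0, norm_zero, Real.log_zero]
      exact circleAverage_nonneg_of_nonneg fun x _ => Real.posLog_nonneg
    · have hg' : AnalyticOnNhd ℂ g (closedBall z |r|) := by rwa [habs]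
      have hJ := hg'.circleAverage_log_norm hr.ne' h0
      have h1 : Real.log ‖g z‖ ≤ circleAverage (fun x => Real.log ‖g x‖) z r := by
        rw [hJ]
        have : 0 ≤ ∑ᶠ u, (MeromorphicOn.divisor g (closedBall z |r|) u : ℝ)
            * Real.log (r * ‖z - u‖⁻¹) := by
          apply finsum_nonneg
          intro u
          by_cases hu : u ∈ closedBall z |r|
          · apply mul_nonneg
            · exact_mod_cast (MeromorphicOn.AnalyticOnNhd.divisor_nonneg hg') u
            · by_cases hzu : z = u
              · simp [hzu]
              · apply Real.log_nonneg
                have : 0 < ‖z - u‖ := norm_pos_iff.2 (sub_ne_zero.2 hzu)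
                rw [← div_eq_mul_inv, one_le_div this, norm_sub_rev, ← dist_eq_norm]
                rwa [habs, mem_closedBall] at hu
          · rw [Function.locallyFinsuppWithin.apply_eq_zero_of_notMem _ hu]; simp
        linarith
      refine h1.trans (circleAverage_mono hI2 hI1 fun x _ => ?_)
      exact le_max_right _ _

open Real Metric Set Filter Topology MeasureTheory in
lemma aux_submean {g : ℂ → ℂ} {b z : ℂ} {ρ s : ℝ} (hs : 0 < s)
    (hg : AnalyticOnNhd ℂ g (ball b ρ)) (hz : closedBall z s ⊆ ball b ρ) :
    ENNReal.ofReal (s ^ 2 * Real.posLog ‖g z‖) ≤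
      ∫⁻ p in ball b ρ, ENNReal.ofReal (Real.posLog ‖g p‖) := by
  set U : ℂ → ENNReal := (ball b ρ).indicator fun p => ENNReal.ofReal (Real.posLog ‖g p‖) with hU
  have hcont : ContinuousOn (fun p => Real.posLog ‖g p‖) (ball b ρ) :=
    Real.continuous_posLog.comp_continuousOn hg.continuousOn.norm
  have hUm : Measurable U := by
    classical
    have : Measurable ((ball b ρ).piecewise (fun p => ENNReal.ofReal (Real.posLog ‖g p‖))
        (fun _ => 0)) :=
      ContinuousOn.measurable_piecewise (ENNReal.continuous_ofReal.comp_continuousOn hcont)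
        continuousOn_const isOpen_ball.measurableSet
    convert this using 1
    exact (piecewise_eq_indicator (s := ball b ρ)).symm
  rw [← lintegral_indicator isOpen_ball.measurableSet, ← lintegral_add_right_eq_self U z,
    ← Complex.lintegral_comp_polarCoord_symm, polarCoord_target, Measure.volume_eq_prod,
    ← Measure.prod_restrict, lintegral_prod]
  swap
  · apply Measurable.aemeasurable
    simp only [Complex.polarCoord_symm_apply, smul_eq_mul]
    apply Measurable.mul (by fun_prop)
    apply hUm.comp
    fun_prop
  have key : ∀ r ∈ Ioo (s/2) s, ENNReal.ofReal (s * π * Real.posLog ‖g z‖) ≤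
      ∫⁻ θ in Ioo (-π) π, ENNReal.ofReal r • U (Complex.polarCoord.symm (r, θ) + z) := by
    intro r hr
    have hr0 : 0 < r := by linarith [hr.1]
    have hsub : closedBall z r ⊆ ball b ρ := (closedBall_subset_closedBall hr.2.le).trans hz
    have hmem : ∀ θ, circleMap z r θ ∈ ball b ρ := fun θ =>
      hsub (circleMap_mem_closedBall z hr0.le θ)
    have h1 := aux_circ hr0 (hg.mono hsub)
    have hc2 : Continuous (fun θ => Real.posLog ‖g (circleMap z r θ)‖) :=
      hcont.comp_continuous (continuous_circleMap z r) hmem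
    have h2 : ∫⁻ θ in Ioo (-π) π, ENNReal.ofReal r • U (Complex.polarCoord.symm (r, θ) + z)
        = ENNReal.ofReal (r * ∫ θ in (-π)..π, Real.posLog ‖g (circleMap z r θ)‖) := by
      rw [intervalIntegral.integral_of_le (by linarith [pi_pos]), integral_Ioc_eq_integral_Ioo,
        ← integral_const_mul, ofReal_integral_eq_lintegral_ofReal]
      · apply lintegral_congr
        intro θ
        have : Complex.polarCoord.symm (r, θ) + z = circleMap z r θ := by
          simp [circleMap, Complex.exp_mul_I, add_comm]
        rw [this, hU, indicator_of_mem (hmem θ), smul_eq_mul, ENNReal.ofReal_mul hr0.le]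
      · exact ((continuous_const.mul hc2).integrableOn_Icc (a := -π) (b := π)).mono_set
          Ioo_subset_Icc_self
      · exact Eventually.of_forall fun θ => mul_nonneg hr0.le Real.posLog_nonneg
    rw [h2]
    apply ENNReal.ofReal_le_ofReal
    have hper : Function.Periodic (fun θ => Real.posLog ‖g (circleMap z r θ)‖) (2 * π) := by
      intro θ; simp only [periodic_circleMap z r θ]
    have h3 := hper.intervalIntegral_add_eq (-π) 0
    have e1 : -π + 2 * π = π := by ring
    rw [e1, zero_add] at h3
    rw [h3]
    rw [circleAverage, smul_eq_mul] at h1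
    have hp := pi_pos
    have h4 : 2 * π * Real.posLog ‖g z‖ ≤ ∫ θ in (0:ℝ)..2*π, Real.posLog ‖g (circleMap z r θ)‖ := by
      have := mul_le_mul_of_nonneg_left h1 (by positivity : 0 ≤ 2 * π)
      rwa [← mul_assoc, mul_inv_cancel₀ (by positivity), one_mul] at this
    have h5 : 0 ≤ Real.posLog ‖g z‖ := Real.posLog_nonneg
    calc s * π * Real.posLog ‖g z‖ ≤ (2 * r) * π * Real.posLog ‖g z‖ := by
          gcongr; linarith [hr.1]
      _ = r * (2 * π * Real.posLog ‖g z‖) := by ring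
      _ ≤ _ := by gcongr
  calc ENNReal.ofReal (s ^ 2 * Real.posLog ‖g z‖)
      ≤ ENNReal.ofReal (s * π * Real.posLog ‖g z‖) * ENNReal.ofReal (s - s / 2) := by
        rw [← ENNReal.ofReal_mul (by have := pi_pos; have := @Real.posLog_nonneg ‖g z‖; positivity)]
        apply ENNReal.ofReal_le_ofReal
        have h5 : 0 ≤ s^2 * Real.posLog ‖g z‖ := mul_nonneg (by positivity) Real.posLog_nonneg
        nlinarith [pi_gt_three]
    _ = ∫⁻ r in Ioo (s/2) s, ENNReal.ofReal (s * π * Real.posLog ‖g z‖) := by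
        rw [setLIntegral_const, Real.volume_Ioo]
    _ ≤ ∫⁻ r in Ioo (s/2) s, ∫⁻ θ in Ioo (-π) π,
          ENNReal.ofReal r • U (Complex.polarCoord.symm (r, θ) + z) :=
        setLIntegral_mono' measurableSet_Ioo key
    _ ≤ _ := lintegral_mono_set (fun r hr => by have := hr.1; simp only [mem_Ioi]; linarith)

open Real Metric Set Filter Topology MeasureTheory in
lemma aux_hartogs {d : ℕ → ℂ → ℂ} {b : ℂ} {ρ A C q : ℝ} (hρ : 0 < ρ) (hA : 1 ≤ A) (hC : 1 ≤ C)
    (hq : 1 < q) (hd : ∀ l, AnalyticOnNhd ℂ (d l) (ball b ρ))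
    (hb : ∀ l, ∀ z ∈ ball b ρ, ‖d l z‖ ≤ A * C ^ l)
    (hp : ∀ z ∈ ball b ρ, ∃ M : ℝ, ∀ l, ‖d l z‖ ≤ M) :
    ∃ B : ℝ, ∀ l, ∀ z ∈ ball b (ρ / 2), ‖d l z‖ ≤ B * q ^ l := by
  have hlim : Tendsto (fun l : ℕ => ∫⁻ p in ball b ρ,
      ENNReal.ofReal (Real.posLog ‖d l p‖ / l)) atTop (𝓝 (∫⁻ p in ball b ρ, 0)) := by
    apply tendsto_lintegral_of_dominated_convergence' (fun _ => ENNReal.ofReal (Real.log A + Real.log C))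
    · intro l
      apply ContinuousOn.aemeasurable _ isOpen_ball.measurableSet
      apply ENNReal.continuous_ofReal.comp_continuousOn
      exact (Real.continuous_posLog.comp_continuousOn (hd l).continuousOn.norm).div_const _
    · intro l
      refine (ae_restrict_iff' isOpen_ball.measurableSet).2 (Eventually.of_forall fun z hz => ?_)
      apply ENNReal.ofReal_le_ofReal
      have hlA := Real.log_nonneg hA
      have hlC := Real.log_nonneg hC
      rcases Nat.eq_zero_or_pos l with rfl | hl
      · simp; positivity
      · have hl' : (1:ℝ) ≤ l := by exact_mod_cast hl
        rw [div_le_iff₀ (by linarith)]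
        calc Real.posLog ‖d l z‖ ≤ Real.posLog (A * C ^ l) :=
              Real.posLog_le_posLog (norm_nonneg _) (hb l z hz)
          _ = Real.log (A * C^l) := by
              apply Real.posLog_eq_log
              have : 1 ≤ A * C ^ l := one_le_mul_of_one_le_of_one_le hA (one_le_pow₀ hC)
              exact this.trans (le_abs_self _)
          _ = Real.log A + l * Real.log C := by
              rw [Real.log_mul (by positivity) (by positivity), Real.log_pow]
          _ ≤ _ := by nlinarith
    · rw [setLIntegral_const]
      exact ENNReal.mul_ne_top ENNReal.ofReal_ne_top measure_ball_lt_top.ne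
    · refine (ae_restrict_iff' isOpen_ball.measurableSet).2 (Eventually.of_forall fun z hz => ?_)
      obtain ⟨M, hM⟩ := hp z hz
      rw [← ENNReal.ofReal_zero]
      apply ENNReal.tendsto_ofReal
      refine squeeze_zero (fun l => div_nonneg Real.posLog_nonneg (by positivity)) (fun l => ?_)
        (tendsto_const_div_atTop_nhds_zero_nat (Real.posLog M))
      gcongr
      exact hM l
  rw [lintegral_zero] at hlim
  have hlq := Real.log_pos hq
  set s := ρ / 4 with hs
  have hs0 : 0 < s := by positivity
  have hev := hlim.eventually_lt_const (u := ENNReal.ofReal (s^2 * Real.log q))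
    (by rw [ENNReal.ofReal_pos]; positivity)
  obtain ⟨N, hN⟩ := eventually_atTop.1 hev
  refine ⟨A * C ^ (N + 1), fun l z hz => ?_⟩
  have hzb : z ∈ ball b ρ := ball_subset_ball (by linarith) hz
  by_cases hl : l ≤ N
  · calc ‖d l z‖ ≤ A * C ^ l := hb l z hzb
      _ ≤ A * C ^ (N+1) * 1 := by
        rw [mul_one]
        gcongr
        omega
      _ ≤ _ := by gcongr; exact one_le_pow₀ hq.le
  · push Not at hl
    have hlpos : (0:ℝ) < l := by exact_mod_cast (by omega : 0 < l)
    have h1 := hN l hl.le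
    have hsub : closedBall z s ⊆ ball b ρ := by
      intro y hy
      rw [mem_closedBall] at hy; rw [mem_ball] at hz ⊢
      have := dist_triangle y z b
      linarith
    have h2 := aux_submean hs0 (hd l) hsub
    have h3 : ENNReal.ofReal (s^2 * Real.posLog ‖d l z‖) ≤ ENNReal.ofReal (l * (s^2 * Real.log q)) := by
      refine h2.trans ?_
      rw [ENNReal.ofReal_mul hlpos.le]
      calc _ = ∫⁻ p in ball b ρ, ENNReal.ofReal l * ENNReal.ofReal (Real.posLog ‖d l p‖ / l) := by
            apply lintegral_congr
            intro p
            rw [← ENNReal.ofReal_mul hlpos.le]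
            congr 1
            field_simp
        _ = ENNReal.ofReal l * ∫⁻ p in ball b ρ, ENNReal.ofReal (Real.posLog ‖d l p‖ / l) :=
            lintegral_const_mul' _ _ ENNReal.ofReal_ne_top
        _ ≤ _ := by gcongr
    rw [ENNReal.ofReal_le_ofReal_iff (by positivity)] at h3
    have h4 : Real.log ‖d l z‖ ≤ l * Real.log q := by
      have : Real.posLog ‖d l z‖ ≤ l * Real.log q := by
        have h5 : s^2 * Real.posLog ‖d l z‖ ≤ s^2 * (l * Real.log q) := by linarith
        exact le_of_mul_le_mul_left h5 (by positivity)
      exact (le_max_right _ _).trans this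
    have h6 : ‖d l z‖ ≤ q ^ l := by
      by_cases h0 : ‖d l z‖ = 0
      · rw [h0]; positivity
      · rw [← Real.log_pow] at h4
        exact (Real.log_le_log_iff (by positivity) (by positivity)).1 h4
    calc ‖d l z‖ ≤ 1 * q ^ l := by rwa [one_mul]
      _ ≤ _ := by gcongr; exact one_le_mul_of_one_le_of_one_le hA (one_le_pow₀ hC)


open Metric Set Filter Topology in
lemma aux_dslope_diff {g : ℂ → ℂ} {a : ℂ} {R : ℝ}
    (hg : DifferentiableOn ℂ g (ball a R)) : DifferentiableOn ℂ (dslope g a) (ball a R) := by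
  by_cases hR : 0 < R
  · exact (Complex.differentiableOn_dslope (ball_mem_nhds a hR)).2 hg
  · rw [ball_eq_empty.2 (not_lt.1 hR)]; exact differentiableOn_empty

open Metric Set Filter Topology in
lemma aux_dslope_bd {g : ℂ → ℂ} {a w : ℂ} {R M : ℝ}
    (hg : DifferentiableOn ℂ g (ball a R)) (hM : ∀ w ∈ ball a R, ‖g w‖ ≤ M) (hw : w ∈ ball a R) :
    ‖dslope g a w‖ ≤ M * (2 / R) := by
  have hR : 0 < R := pos_of_mem_ball hw
  have := Complex.norm_dslope_le_div_of_mapsTo_ball (R₂ := M * 2) hg (fun y hy => by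
    rw [mem_closedBall, dist_eq_norm]
    have h1 := norm_sub_le (g y) (g a)
    have h2 := hM y hy
    have h3 := hM a (mem_ball_self hR)
    linarith) hw
  rwa [mul_div_assoc] at this

open Metric Set Filter Topology in
lemma aux_schwarz {g : ℂ → ℂ} {a w : ℂ} {R M : ℝ}
    (hg : DifferentiableOn ℂ g (ball a R)) (hM : ∀ w ∈ ball a R, ‖g w‖ ≤ M) (hw : w ∈ ball a R) :
    ‖g w - g a‖ ≤ M * (2 / R) * ‖w - a‖ := by
  have h := aux_dslope_bd hg hM hw
  have e : g w - g a = (w - a) * dslope g a w := by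
    have := sub_smul_dslope g a w
    rw [smul_eq_mul] at this
    exact this.symm
  rw [e, norm_mul, mul_comm]
  gcongr

open Metric Set Filter Topology in
lemma aux_quot {g : ℂ → ℂ} {a w : ℂ} {R M : ℝ}
    (hg : DifferentiableOn ℂ g (ball a R)) (hM : ∀ w ∈ ball a R, ‖g w‖ ≤ M) (hw : w ∈ ball a R) :
    ‖dslope g a w - deriv g a‖ ≤ M * (2 / R) * (2 / R) * ‖w - a‖ := by
  have := aux_schwarz (aux_dslope_diff hg) (fun y hy => aux_dslope_bd hg hM hy) hw
  rwa [dslope_same] at this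

open Metric Set Filter Topology in
lemma aux_deriv_param {F : ℂ → ℂ → ℂ} {S : Set ℂ} {a : ℂ} {R M : ℝ} (hR : 0 < R) (hS : IsOpen S)
    (h1 : ∀ w ∈ ball a R, DifferentiableOn ℂ (fun z => F z w) S)
    (h2 : ∀ z ∈ S, DifferentiableOn ℂ (F z) (ball a R))
    (hM : ∀ z ∈ S, ∀ w ∈ ball a R, ‖F z w‖ ≤ M) :
    DifferentiableOn ℂ (fun z => deriv (F z) a) S := by
  have hlim : Tendsto (fun w => M * (2 / R) * (2 / R) * ‖w - a‖) (𝓝[≠] a) (𝓝 0) := by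
    have : Continuous (fun w => M * (2 / R) * (2 / R) * ‖w - a‖) := by fun_prop
    have := this.tendsto a
    simp only [sub_self, norm_zero, mul_zero] at this
    exact this.mono_left nhdsWithin_le_nhds
  have hball : ∀ᶠ w in 𝓝[≠] a, w ∈ ball a R := nhdsWithin_le_nhds (ball_mem_nhds a hR)
  have hu : TendstoUniformlyOn (fun w z => dslope (F z) a w) (fun z => deriv (F z) a) (𝓝[≠] a) S := by
    rw [Metric.tendstoUniformlyOn_iff]
    intro ε hε
    filter_upwards [hball, hlim.eventually_lt_const hε] with w hw hlt z hz
    rw [dist_comm, dist_eq_norm]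
    exact (aux_quot (h2 z hz) (hM z hz) hw).trans_lt hlt
  refine hu.tendstoLocallyUniformlyOn.differentiableOn ?_ hS
  filter_upwards [hball, self_mem_nhdsWithin] with w hw hne
  have : (fun z => dslope (F z) a w) = fun z => (w - a)⁻¹ * (F z w - F z a) := by
    ext z
    rw [dslope_of_ne _ hne, slope_def_module, smul_eq_mul]
  rw [this]
  exact ((h1 w hw).sub (h1 a (mem_ball_self hR))).const_mul _

noncomputable def auxT (F : ℂ → ℂ → ℂ) (a : ℂ) : ℕ → ℂ → ℂ → ℂ
  | 0 => F
  | l + 1 => fun z => dslope (auxT F a l z) a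

open Metric Set Filter Topology in
lemma auxT_bd {F : ℂ → ℂ → ℂ} {a z : ℂ} {R M : ℝ}
    (hg : DifferentiableOn ℂ (F z) (ball a R)) (hM : ∀ w ∈ ball a R, ‖F z w‖ ≤ M) (l : ℕ) :
    DifferentiableOn ℂ (auxT F a l z) (ball a R) ∧
      ∀ w ∈ ball a R, ‖auxT F a l z w‖ ≤ M * (2 / R) ^ l := by
  induction l with
  | zero => exact ⟨hg, fun w hw => by simpa [auxT] using hM w hw⟩
  | succ l ih =>
    refine ⟨aux_dslope_diff ih.1, fun w hw => ?_⟩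
    have := aux_dslope_bd ih.1 ih.2 hw
    rwa [mul_assoc, ← pow_succ] at this

open Metric Set Filter Topology in
lemma auxT_diff {F : ℂ → ℂ → ℂ} {S : Set ℂ} {a : ℂ} {R M : ℝ} (hR : 0 < R) (hS : IsOpen S)
    (h1 : ∀ w ∈ ball a R, DifferentiableOn ℂ (fun z => F z w) S)
    (h2 : ∀ z ∈ S, DifferentiableOn ℂ (F z) (ball a R))
    (hM : ∀ z ∈ S, ∀ w ∈ ball a R, ‖F z w‖ ≤ M) (l : ℕ) :
    ∀ w ∈ ball a R, DifferentiableOn ℂ (fun z => auxT F a l z w) S := by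
  induction l with
  | zero => exact h1
  | succ l ih =>
    intro w hw
    by_cases hne : w = a
    · subst hne
      simp only [auxT, dslope_same]
      exact aux_deriv_param hR hS ih (fun z hz => (auxT_bd (h2 z hz) (hM z hz) l).1)
        (fun z hz => (auxT_bd (h2 z hz) (hM z hz) l).2)
    · have : (fun z => auxT F a (l+1) z w) = fun z => (w - a)⁻¹ * (auxT F a l z w - auxT F a l z a) := by
        ext z
        simp only [auxT]
        rw [dslope_of_ne _ hne, slope_def_module, smul_eq_mul]
      rw [this]
      exact ((ih w hw).sub (ih a (mem_ball_self hR))).const_mul _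

lemma auxT_expand (F : ℂ → ℂ → ℂ) (a z w : ℂ) (l : ℕ) :
    F z w = (∑ j ∈ Finset.range l, auxT F a j z a * (w - a) ^ j) + (w - a) ^ l * auxT F a l z w := by
  induction l with
  | zero => simp [auxT]
  | succ l ih =>
    have := sub_smul_dslope (auxT F a l z) a w
    rw [smul_eq_mul] at this
    rw [Finset.sum_range_succ, ih]
    simp only [auxT]
    linear_combination (-(w - a)^l) * this

open Metric Set Filter Topology in
lemma aux_baire {F : ℂ → ℂ → ℂ} {b c : ℂ} {ρ r : ℝ} (hρ : 0 < ρ) (hr : 0 < r) (hr' : r ≤ ρ)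
    (h1 : ∀ w ∈ ball c (4 * ρ), DifferentiableOn ℂ (fun z => F z w) (ball b (4 * ρ)))
    (h2 : ∀ z ∈ ball b (4 * ρ), DifferentiableOn ℂ (F z) (ball c (4 * ρ))) :
    ∃ a ∈ ball c r, ∃ ε > 0, ∃ N : ℕ, ∀ z ∈ ball b ρ, ∀ w ∈ ball a ε, ‖F z w‖ ≤ N := by
  let f : ℕ → Set ℂ := fun N => (ball c r)ᶜ ∪ ⋂ z ∈ closedBall b ρ, (closedBall c r ∩ F z ⁻¹' closedBall 0 N)
  have hsub : closedBall c r ⊆ ball c (4 * ρ) := closedBall_subset_ball (by linarith)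
  have hsub' : closedBall b ρ ⊆ ball b (4 * ρ) := closedBall_subset_ball (by linarith)
  have hc : ∀ N, IsClosed (f N) := by
    intro N
    refine isOpen_ball.isClosed_compl.union (isClosed_biInter fun z hz => ?_)
    exact ((h2 z (hsub' hz)).continuousOn.mono hsub).preimage_isClosed_of_isClosed
      isClosed_closedBall isClosed_closedBall
  have hU : ⋃ N, f N = univ := by
    refine eq_univ_of_forall fun w => mem_iUnion.2 ?_
    by_cases hw : w ∈ ball c r
    · have hw' := ball_subset_closedBall hw
      obtain ⟨C, hC⟩ := (isCompact_closedBall b ρ).exists_bound_of_continuousOn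
        ((h1 w (hsub hw')).continuousOn.mono hsub')
      obtain ⟨N, hN⟩ := exists_nat_ge C
      refine ⟨N, Or.inr (mem_iInter₂.2 fun z hz => ⟨hw', ?_⟩)⟩
      simpa using (hC z hz).trans hN
    · exact ⟨0, Or.inl hw⟩
  obtain ⟨a, ha, ha'⟩ := (dense_iUnion_interior_of_closed hc hU).inter_open_nonempty (ball c r) isOpen_ball
    ⟨c, mem_ball_self hr⟩
  obtain ⟨N, hN⟩ := mem_iUnion.1 ha'
  have hopen : IsOpen (interior (f N) ∩ ball c r) := isOpen_interior.inter isOpen_ball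
  obtain ⟨ε, hε, hε'⟩ := Metric.isOpen_iff.1 hopen a ⟨hN, ha⟩
  refine ⟨a, ha, ε, hε, N, fun z hz w hw => ?_⟩
  have h3 := hε' hw
  rcases interior_subset h3.1 with h | h
  · exact absurd h3.2 h
  · have := (mem_iInter₂.1 h z (ball_subset_closedBall hz)).2
    simpa using this

open Metric Set Filter Topology in
lemma aux_loc_bdd {F : ℂ → ℂ → ℂ} {b c : ℂ} {ρ : ℝ} (hρ : 0 < ρ)
    (h1 : ∀ w ∈ ball c (4 * ρ), DifferentiableOn ℂ (fun z => F z w) (ball b (4 * ρ)))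
    (h2 : ∀ z ∈ ball b (4 * ρ), DifferentiableOn ℂ (F z) (ball c (4 * ρ))) :
    ∃ δ > 0, δ ≤ ρ ∧ ∃ M : ℝ, ∀ z ∈ ball b δ, ∀ w ∈ ball c δ, ‖F z w‖ ≤ M := by
  obtain ⟨a, ha, ε', hε', N, hN⟩ := aux_baire (r := ρ / 8) hρ (by positivity) (by linarith) h1 h2
  set ε := min ε' ρ with hε
  have hε0 : 0 < ε := lt_min hε' hρ
  have hερ : ε ≤ ρ := min_le_right _ _
  rw [mem_ball] at ha
  have hsub : closedBall a ρ ⊆ ball c (4 * ρ) := by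
    intro y hy
    rw [mem_closedBall] at hy; rw [mem_ball]
    linarith [dist_triangle y a c]
  have hsub2 : ball a ε ⊆ ball c (4 * ρ) :=
    (ball_subset_closedBall.trans (closedBall_subset_closedBall hερ)).trans hsub
  have hsub3 : ball b ρ ⊆ ball b (4 * ρ) := ball_subset_ball (by linarith)
  have g1 : ∀ w ∈ ball a ε, DifferentiableOn ℂ (fun z => F z w) (ball b ρ) := fun w hw =>
    (h1 w (hsub2 hw)).mono hsub3
  have g2 : ∀ z ∈ ball b ρ, DifferentiableOn ℂ (F z) (ball a ε) := fun z hz =>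
    (h2 z (hsub3 hz)).mono hsub2
  have g2' : ∀ z ∈ ball b ρ, DifferentiableOn ℂ (F z) (ball a ρ) := fun z hz =>
    (h2 z (hsub3 hz)).mono (ball_subset_closedBall.trans hsub)
  have hM : ∀ z ∈ ball b ρ, ∀ w ∈ ball a ε, ‖F z w‖ ≤ ((N:ℝ) + 1) := fun z hz w hw =>
    (hN z hz w (ball_subset_ball (min_le_left _ _) hw)).trans (by linarith)
  have hP : ∀ z ∈ ball b ρ, ∃ M : ℝ, ∀ w ∈ ball a ρ, ‖F z w‖ ≤ M := by
    intro z hz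
    obtain ⟨C, hC⟩ := (isCompact_closedBall a ρ).exists_bound_of_continuousOn
        ((h2 z (hsub3 hz)).continuousOn.mono hsub)
    exact ⟨C, fun w hw => hC w (ball_subset_closedBall hw)⟩
  obtain ⟨B, hB⟩ := aux_hartogs (d := fun l z => auxT F a l z a * ((ρ / 2 : ℝ) : ℂ) ^ l) (b := b)
    (ρ := ρ) (A := N + 1) (C := ρ / ε) (q := 3 / 2) hρ (by linarith [(Nat.cast_nonneg N : (0:ℝ) ≤ N)])
    ((one_le_div hε0).2 hερ) (by norm_num)
    (fun l => ((auxT_diff hε0 isOpen_ball g1 g2 hM l a (mem_ball_self hε0)).mul_const _).analyticOnNhd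
      isOpen_ball)
    (fun l z hz => by
      have := (auxT_bd (g2 z hz) (hM z hz) l).2 a (mem_ball_self hε0)
      rw [norm_mul, norm_pow, Complex.norm_real, Real.norm_of_nonneg (by positivity)]
      calc _ ≤ (N + 1) * (2 / ε) ^ l * (ρ / 2) ^ l := by gcongr
        _ = _ := by
          rw [mul_assoc, ← mul_pow]
          congr 2
          field_simp)
    (fun z hz => by
      obtain ⟨M, hM'⟩ := hP z hz
      refine ⟨M, fun l => ?_⟩
      have := (auxT_bd (g2' z hz) hM' l).2 a (mem_ball_self hρ)
      rw [norm_mul, norm_pow, Complex.norm_real, Real.norm_of_nonneg (by positivity)]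
      calc _ ≤ M * (2 / ρ) ^ l * (ρ / 2) ^ l := by gcongr
        _ = M := by
          rw [mul_assoc, ← mul_pow]
          have : 2 / ρ * (ρ / 2) = 1 := by field_simp
          rw [this, one_pow, mul_one])
  refine ⟨ρ / 8, by positivity, by linarith, B * 4, fun z hz w hw => ?_⟩
  have hzρ : z ∈ ball b ρ := ball_subset_ball (by linarith) hz
  have hz2 : z ∈ ball b (ρ / 2) := ball_subset_ball (by linarith) hz
  have hwa : ‖w - a‖ ≤ ρ / 4 := by
    rw [← dist_eq_norm]
    rw [mem_ball] at hw
    linarith [dist_triangle w c a, dist_comm c a]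
  have hwρ : w ∈ ball a ρ := by rw [mem_ball, dist_eq_norm]; linarith
  obtain ⟨M, hM'⟩ := hP z hzρ
  have hB0 : 0 ≤ B := by
    have := (norm_nonneg _).trans (hB 0 z hz2)
    simpa using this
  have hterm : ∀ j, ‖auxT F a j z a * (w - a) ^ j‖ ≤ B * (3 / 4) ^ j := by
    intro j
    have h := hB j z hz2
    rw [norm_mul, norm_pow, Complex.norm_real, Real.norm_of_nonneg (by positivity)] at h
    rw [norm_mul, norm_pow]
    calc ‖auxT F a j z a‖ * ‖w - a‖ ^ j ≤ ‖auxT F a j z a‖ * (ρ / 4) ^ j := by gcongr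
      _ = (‖auxT F a j z a‖ * (ρ / 2) ^ j) * (1 / 2) ^ j := by
          rw [mul_assoc, ← mul_pow]; congr 2; ring
      _ ≤ B * (3 / 2) ^ j * (1 / 2) ^ j := by gcongr
      _ = _ := by rw [mul_assoc, ← mul_pow]; norm_num
  have hall : ∀ l : ℕ, ‖F z w‖ ≤ B * 4 + M * (1 / 2) ^ l := by
    intro l
    rw [auxT_expand F a z w l]
    refine (norm_add_le _ _).trans (add_le_add ?_ ?_)
    · refine (norm_sum_le _ _).trans ((Finset.sum_le_sum fun j _ => hterm j).trans ?_)
      rw [← Finset.mul_sum]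
      gcongr
      have := (summable_geometric_of_lt_one (r := (3/4 : ℝ)) (by norm_num) (by norm_num)).sum_le_tsum
        (Finset.range l) (fun _ _ => by positivity)
      rw [tsum_geometric_of_lt_one (by norm_num) (by norm_num)] at this
      norm_num at this ⊢
      exact this
    · have := (auxT_bd (g2' z hzρ) hM' l).2 w hwρ
      rw [norm_mul, norm_pow]
      have hM0 : 0 ≤ M := (norm_nonneg _).trans (hM' w hwρ)
      calc _ ≤ (ρ / 4) ^ l * (M * (2 / ρ) ^ l) := by gcongr
        _ = M * ((ρ / 4) * (2 / ρ)) ^ l := by rw [mul_pow]; ring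
        _ = _ := by congr 2; field_simp; norm_num
  have hlim : Tendsto (fun l : ℕ => B * 4 + M * (1 / 2 : ℝ) ^ l) atTop (𝓝 (B * 4 + M * 0)) :=
    ((tendsto_pow_atTop_nhds_zero_of_lt_one (by norm_num) (by norm_num)).const_mul M).const_add _
  rw [mul_zero, add_zero] at hlim
  exact ge_of_tendsto' hlim hall


open Metric Set Filter Topology in
lemma aux_mixed {F : ℂ → ℂ → ℂ} {b c : ℂ} {δ M : ℝ} (hδ : 0 < δ)
    (h1 : ∀ w ∈ ball c δ, DifferentiableOn ℂ (fun z => F z w) (ball b δ))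
    (h2 : ∀ z ∈ ball b δ, DifferentiableOn ℂ (F z) (ball c δ))
    (hM : ∀ z ∈ ball b δ, ∀ w ∈ ball c δ, ‖F z w‖ ≤ M) :
    Tendsto (fun h : ℂ => (F (b + h) (c + starRingEnd ℂ h) - F b (c + starRingEnd ℂ h)
      - F (b + h) c + F b c) / (h * starRingEnd ℂ h)) (𝓝[≠] 0)
      (𝓝 (deriv (fun z => deriv (F z) c) b)) := by
  have hdd := aux_deriv_param hδ isOpen_ball h1 h2 hM
  have hb : ∀ᶠ h : ℂ in 𝓝[≠] 0, ‖h‖ < δ := by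
    apply nhdsWithin_le_nhds
    filter_upwards [ball_mem_nhds (0:ℂ) hδ] with h hh
    simpa using hh
  set P : ℂ → ℂ → ℂ := fun k z => dslope (F z) c (c + k) - deriv (F z) c with hP
  have hPd : ∀ k, k ≠ 0 → ‖k‖ < δ → DifferentiableOn ℂ (P k) (ball b δ) := by
    intro k hk hkδ
    refine DifferentiableOn.sub ?_ hdd
    have : (fun z => dslope (F z) c (c + k)) = fun z => (c + k - c)⁻¹ * (F z (c + k) - F z c) := by
      ext z
      rw [dslope_of_ne _ (by simpa using hk), slope_def_module, smul_eq_mul]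
    rw [this]
    exact ((h1 (c + k) (by simpa [mem_ball, dist_eq_norm] using hkδ)).sub
      (h1 c (mem_ball_self hδ))).const_mul _
  have hPb : ∀ k, ‖k‖ < δ → ∀ z ∈ ball b δ, ‖P k z‖ ≤ M * (2 / δ) * (2 / δ) * ‖k‖ := by
    intro k hkδ z hz
    have := aux_quot (w := c + k) (h2 z hz) (hM z hz) (by simpa [mem_ball, dist_eq_norm] using hkδ)
    simpa using this
  have t1 : Tendsto (fun h : ℂ => h⁻¹ * (P (starRingEnd ℂ h) (b + h) - P (starRingEnd ℂ h) b))
      (𝓝[≠] 0) (𝓝 0) := by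
    have hl : Tendsto (fun h : ℂ => M * (2 / δ) * (2 / δ) * ‖h‖ * (2 / δ)) (𝓝[≠] 0) (𝓝 0) := by
      have : Continuous (fun h : ℂ => M * (2 / δ) * (2 / δ) * ‖h‖ * (2 / δ)) := by fun_prop
      have := this.tendsto 0
      simp only [norm_zero, mul_zero, zero_mul] at this
      exact this.mono_left nhdsWithin_le_nhds
    refine squeeze_zero_norm' ?_ hl
    filter_upwards [hb, self_mem_nhdsWithin] with h hh hne
    have hne' : h ≠ 0 := hne
    have hk : ‖starRingEnd ℂ h‖ = ‖h‖ := RCLike.norm_conj h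
    have := aux_schwarz (w := b + h) (hPd (starRingEnd ℂ h) (by simpa using hne') (by rwa [hk]))
      (hPb _ (by rwa [hk])) (by simpa [mem_ball, dist_eq_norm] using hh)
    rw [norm_mul, norm_inv, inv_mul_le_iff₀ (norm_pos_iff.2 hne')]
    rw [hk, add_sub_cancel_left] at this
    linarith
  have t2 : Tendsto (fun h : ℂ => dslope (fun z => deriv (F z) c) b (b + h)) (𝓝[≠] 0)
      (𝓝 (deriv (fun z => deriv (F z) c) b)) := by
    have hd : DifferentiableAt ℂ (fun z => deriv (F z) c) b :=
      hdd.differentiableAt (ball_mem_nhds b hδ)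
    have hc : ContinuousAt (dslope (fun z => deriv (F z) c) b) b := continuousAt_dslope_same.2 hd
    have hadd : Tendsto (fun h : ℂ => b + h) (𝓝[≠] 0) (𝓝 b) := by
      have : Continuous (fun h : ℂ => b + h) := by fun_prop
      have := this.tendsto 0
      rw [add_zero] at this
      exact this.mono_left nhdsWithin_le_nhds
    have := hc.tendsto.comp hadd
    rwa [dslope_same] at this
  have t3 := t1.add t2
  rw [zero_add] at t3
  refine t3.congr' ?_
  filter_upwards [self_mem_nhdsWithin] with h hne
  have hne' : h ≠ 0 := hne
  have hk0 : starRingEnd ℂ h ≠ 0 := by simpa using hne'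
  simp only [hP]
  rw [dslope_of_ne _ (by simpa using hk0), dslope_of_ne _ (by simpa using hk0),
    dslope_of_ne _ (by simpa using hne')]
  simp only [slope_def_module, smul_eq_mul, add_sub_cancel_left]
  field_simp
  ring

open Metric Set Filter Topology in
lemma aux_lim {F : ℂ → ℂ → ℂ} {b c : ℂ} {ρ : ℝ} (hρ : 0 < ρ)
    (h1 : ∀ w ∈ ball c (4 * ρ), DifferentiableOn ℂ (fun z => F z w) (ball b (4 * ρ)))
    (h2 : ∀ z ∈ ball b (4 * ρ), DifferentiableOn ℂ (F z) (ball c (4 * ρ))) :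
    Tendsto (fun h : ℂ => (F b c * F (b + h) (c + starRingEnd ℂ h) - F b (c + starRingEnd ℂ h)
      * F (b + h) c) / (h * starRingEnd ℂ h)) (𝓝[≠] 0)
      (𝓝 (F b c * deriv (fun z => deriv (F z) c) b - deriv (fun z => F z c) b * deriv (F b) c)) := by
  obtain ⟨δ, hδ, hδρ, M, hM⟩ := aux_loc_bdd hρ h1 h2
  have s1 : ball b δ ⊆ ball b (4 * ρ) := ball_subset_ball (by linarith)
  have s2 : ball c δ ⊆ ball c (4 * ρ) := ball_subset_ball (by linarith)
  have t := aux_mixed hδ (fun w hw => (h1 w (s2 hw)).mono s1) (fun z hz => (h2 z (s1 hz)).mono s2) hM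
  have hρ4 : 0 < 4 * ρ := by positivity
  have d1 : HasDerivAt (fun z => F z c) (deriv (fun z => F z c) b) b :=
    ((h1 c (mem_ball_self hρ4)).differentiableAt (ball_mem_nhds b hρ4)).hasDerivAt
  have d2 : HasDerivAt (F b) (deriv (F b) c) c :=
    ((h2 b (mem_ball_self hρ4)).differentiableAt (ball_mem_nhds c hρ4)).hasDerivAt
  have e1 := hasDerivAt_iff_tendsto_slope_zero.1 d1
  have e2 := hasDerivAt_iff_tendsto_slope_zero.1 d2
  have hconj : Tendsto (starRingEnd ℂ) (𝓝[≠] 0) (𝓝[≠] 0) := by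
    apply tendsto_nhdsWithin_of_tendsto_nhds_of_eventually_within
    · have := Complex.continuous_conj.tendsto 0
      rw [map_zero] at this
      exact this.mono_left nhdsWithin_le_nhds
    · filter_upwards [self_mem_nhdsWithin] with h hne
      have hne' : h ≠ 0 := hne
      simpa using hne'
  have e3 := e2.comp hconj
  refine ((t.const_mul (F b c)).sub (e1.mul e3)).congr' ?_
  filter_upwards [self_mem_nhdsWithin] with h hne
  have hne' : h ≠ 0 := hne
  have hk0 : starRingEnd ℂ h ≠ 0 := by simpa using hne'
  simp only [Function.comp, smul_eq_mul]
  field_simp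
  ring

open scoped Matrix MatrixOrder in
lemma aux_compound {p : ℕ} (P : Matrix (Fin (p + p)) (Fin (p + p)) ℂ) (hP : P.PosSemidef)
    (u v : Fin p → Fin (p + p)) :
    (Matrix.of fun i j : Fin p => P (u i) (u j) * P (v i) (v j) - P (u i) (v j) * P (v i) (u j)).PosSemidef := by
  obtain ⟨B, hB⟩ : ∃ B : Matrix (Fin (p + p)) (Fin (p + p)) ℂ, P = Bᴴ * B := by
    obtain ⟨X, hX, -, hXe⟩ :=
      CFC.exists_sqrt_of_isSelfAdjoint_of_quasispectrumRestricts hP.isHermitian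
        (QuasispectrumRestricts.nnreal_of_nonneg hP.nonneg)
    refine ⟨X, ?_⟩
    rw [← Matrix.star_eq_conjTranspose, hX.star_eq, hXe]
  let C : Matrix (Fin (p + p) × Fin (p + p)) (Fin p) ℂ := Matrix.of fun ab i =>
    B ab.1 (u i) * B ab.2 (v i) - B ab.2 (u i) * B ab.1 (v i)
  have hE : ∀ s t, P s t = ∑ a, star (B a s) * B a t := by
    intro s t
    rw [hB, Matrix.mul_apply]; rfl
  have : (Matrix.of fun i j : Fin p => P (u i) (u j) * P (v i) (v j) - P (u i) (v j) * P (v i) (u j))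
      = (1 / 2 : ℂ) • (Cᴴ * C) := by
    ext i j
    simp only [Matrix.of_apply, Matrix.smul_apply, Matrix.mul_apply, Matrix.conjTranspose_apply,
      smul_eq_mul, C, Fintype.sum_prod_type]
    have expd : ∀ a b, star (B a (u i) * B b (v i) - B b (u i) * B a (v i)) *
        (B a (u j) * B b (v j) - B b (u j) * B a (v j)) =
        ((star (B a (u i)) * B a (u j)) * (star (B b (v i)) * B b (v j))
        + (star (B a (v i)) * B a (v j)) * (star (B b (u i)) * B b (u j)))
        - ((star (B a (u i)) * B a (v j)) * (star (B b (v i)) * B b (u j))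
        + (star (B a (v i)) * B a (u j)) * (star (B b (u i)) * B b (v j))) := by
      intro a b
      simp only [star_sub, star_mul']
      ring
    simp only [expd, Finset.sum_sub_distrib, Finset.sum_add_distrib]
    simp only [← Finset.mul_sum, ← Finset.sum_mul, ← hE]
    ring
  rw [this]
  exact (Matrix.posSemidef_conjTranspose_mul_self C).smul (by norm_num [Complex.le_def])

open Filter Topology in
lemma aux_psd_lim {p : ℕ} {A : ℂ → Matrix (Fin p) (Fin p) ℂ} {G : Matrix (Fin p) (Fin p) ℂ}
    (hA : ∀ᶠ h in 𝓝[≠] (0:ℂ), (A h).PosSemidef)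
    (hl : ∀ i j, Tendsto (fun h => A h i j) (𝓝[≠] 0) (𝓝 (G i j))) : G.PosSemidef := by
  rw [Matrix.posSemidef_iff_dotProduct_mulVec]
  constructor
  · ext i j
    rw [Matrix.conjTranspose_apply]
    have t1 := (continuous_star.tendsto _).comp (hl j i)
    refine tendsto_nhds_unique (t1.congr' ?_) (hl i j)
    filter_upwards [hA] with h hh
    exact hh.1.apply i j
  · intro x
    have t : Tendsto (fun h => star x ⬝ᵥ (A h).mulVec x) (𝓝[≠] 0) (𝓝 (star x ⬝ᵥ G.mulVec x)) := by
      simp only [dotProduct, Matrix.mulVec]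
      exact tendsto_finsetSum _ fun i _ => (tendsto_finsetSum _ fun j _ =>
        (hl i j).mul_const _).const_mul _
    refine ge_of_tendsto t ?_
    filter_upwards [hA] with h hh
    exact hh.dotProduct_mulVec_nonneg x


open Metric Set Filter Topology in
/-- If `K` is a sesqui-analytic non-negative definite kernel on a domain `Ω ⊆ ℂ`, then
`G_{K⁻¹}(z,w) = K ∂∂̄K − ∂K ∂̄K` is a non-negative definite kernel on `Ω`. -/
theorem stmt_3 (Ω : Set ℂ) (hΩo : IsOpen Ω) (hΩc : IsConnected Ω) (K : ℂ → ℂ → ℂ)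
    (hs : Sesq Ω K) (hK : IsNNDOn Ω K) :
    IsNNDOn Ω (fun z w => K z w * D (Db K) z w - D K z w * Db K z w) := by
  intro p x hx
  set F : ℂ → ℂ → ℂ := fun z w => K z (starRingEnd ℂ w) with hF
  have hDb : ∀ z w, Db K z w = deriv (F z) (starRingEnd ℂ w) := by
    intro z w
    have e : F z = starRingEnd ℂ ∘ (fun t => starRingEnd ℂ (K z t)) ∘ starRingEnd ℂ := by
      ext t; simp [hF]
    rw [e, deriv_conj_conj]
    simp [Db]
  apply aux_psd_lim (A := fun h => Matrix.of fun i j => (K (x i) (x j) * K (x i + h) (x j + h)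
    - K (x i) (x j + h) * K (x i + h) (x j)) / (h * starRingEnd ℂ h))
  · have hev : ∀ᶠ h : ℂ in 𝓝[≠] 0, ∀ i, x i + h ∈ Ω := by
      rw [eventually_all]
      intro i
      apply nhdsWithin_le_nhds
      have hc : Continuous (fun h : ℂ => x i + h) := by fun_prop
      exact hc.continuousAt.preimage_mem_nhds (by simpa using hΩo.mem_nhds (hx i))
    filter_upwards [hev, self_mem_nhdsWithin] with h hh hne
    have hne' : h ≠ 0 := hne
    have hP := hK (p + p) (Fin.append x (fun i => x i + h)) (by
      intro i
      refine Fin.addCases (fun i => ?_) (fun i => ?_) i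
      · simpa using hx i
      · rw [Fin.append_right]; exact hh i)
    have h1 := aux_compound _ hP (Fin.castAdd p) (Fin.natAdd p)
    have h2 := h1.smul (a := ((1 / (‖h‖ ^ 2) : ℝ) : ℂ)) (by
      rw [Complex.zero_le_real]; positivity)
    convert h2 using 1
    ext i j
    simp only [Matrix.of_apply, Matrix.smul_apply, smul_eq_mul, Fin.append_left, Fin.append_right,
      Complex.mul_conj, Complex.normSq_eq_norm_sq]
    push_cast
    ring
  · intro i j
    obtain ⟨r1, hr1, hb1⟩ := Metric.isOpen_iff.1 hΩo (x i) (hx i)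
    obtain ⟨r2, hr2, hb2⟩ := Metric.isOpen_iff.1 hΩo (x j) (hx j)
    have hρ : 0 < min r1 r2 / 4 := by have := lt_min hr1 hr2; positivity
    have h4 : 4 * (min r1 r2 / 4) = min r1 r2 := by ring
    have hmem : ∀ w ∈ ball (starRingEnd ℂ (x j)) (min r1 r2), starRingEnd ℂ w ∈ Ω := by
      intro w hw
      apply hb2
      rw [mem_ball] at hw ⊢
      rw [← Complex.dist_conj_conj, Complex.conj_conj]
      exact hw.trans_le (min_le_right _ _)
    have hmem1 : ball (x i) (min r1 r2) ⊆ Ω := (ball_subset_ball (min_le_left _ _)).trans hb1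
    have t := aux_lim (F := F) (b := x i) (c := starRingEnd ℂ (x j)) hρ
      (by
        rw [h4]
        intro w hw
        exact ((hs.1 _ (hmem w hw)).differentiableOn).mono hmem1)
      (by
        rw [h4]
        intro z hz w hw
        have hd := (hs.2 z (hmem1 hz) _ (hmem w hw)).differentiableAt.conj_conj
        rw [Complex.conj_conj] at hd
        have e : F z = starRingEnd ℂ ∘ (fun t => starRingEnd ℂ (K z t)) ∘ starRingEnd ℂ := by
          ext t; simp [hF]
        rw [e]
        exact hd.differentiableWithinAt)
    simp only [Matrix.of_apply, D, hDb]
    simpa only [hF, map_add, Complex.conj_conj] using t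
end

section
/- Let Ω ⊆ ℂ be a domain and K₁, K₂ sesqui-analytic positive definite kernels on Ω with K₁ − K₂ non-negative definite. Then G_{K₁⁻¹} − G_{K₂⁻¹} is a non-negative definite kernel on Ω, where G_{K⁻¹}(z,w) = K(z,w)∂∂̄K(z,w) − ∂K(z,w)∂̄K(z,w). -/
open scoped ComplexOrder

local notation "conj'" => (starRingEnd ℂ)

/-- `K` is a positive definite kernel on the set `s`. -/
def IsPDOn (s : Set ℂ) (K : ℂ → ℂ → ℂ) : Prop :=
  ∀ (p : ℕ) (x : Fin p → ℂ), (∀ i, x i ∈ s) → Function.Injective x →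
    Matrix.PosDef (Matrix.of fun i j : Fin p => K (x i) (x j))


open MeasureTheory Metric in
lemma posLog_circle {g : ℂ → ℂ} {c : ℂ} {s : ℝ} (hs : 0 < s)
    (hg : AnalyticOnNhd ℂ g (closedBall c s)) :
    Real.posLog ‖g c‖ ≤ Real.circleAverage (fun x => Real.posLog ‖g x‖) c s := by
  have habs : |s| = s := abs_of_pos hs
  have hcont : ContinuousOn (fun x => Real.posLog ‖g x‖) (sphere c |s|) := by
    apply Real.continuous_posLog.comp_continuousOn
    apply ContinuousOn.norm
    rw [habs]
    exact hg.continuousOn.mono sphere_subset_closedBall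
  have hint : CircleIntegrable (fun x => Real.posLog ‖g x‖) c s := hcont.circleIntegrable'
  have hnn : 0 ≤ Real.circleAverage (fun x => Real.posLog ‖g x‖) c s := by
    have := Real.circleAverage_mono (c := c) (R := s) (f₁ := fun _ => (0:ℝ)) (f₂ := fun x => Real.posLog ‖g x‖)
      (by simp) hint (fun x _ => Real.posLog_nonneg)
    simpa [Real.circleAverage] using this
  by_cases h0 : g c = 0
  · simpa [h0] using hnn
  have hJ := AnalyticOnNhd.circleAverage_log_norm hs.ne' (by rwa [habs]) h0
  have hsum : 0 ≤ ∑ᶠ (u : ℂ), ((MeromorphicOn.divisor g (closedBall c |s|)) u : ℝ) * Real.log (s * ‖c - u‖⁻¹) := by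
    apply finsum_nonneg
    intro u
    by_cases hu : u ∈ closedBall c |s|
    · apply mul_nonneg
      · have := (MeromorphicOn.AnalyticOnNhd.divisor_nonneg (f := g) (U := closedBall c |s|) (by rwa [habs])) u
        exact_mod_cast this
      · by_cases hcu : c = u
        · simp [hcu]
        apply Real.log_nonneg
        have h1 : 0 < ‖c - u‖ := norm_pos_iff.2 (sub_ne_zero.2 hcu)
        rw [← div_eq_mul_inv, le_div_iff₀ h1, one_mul]
        rw [habs, mem_closedBall, dist_comm, dist_eq_norm] at hu
        exact hu
    · rw [Function.locallyFinsuppWithin.apply_eq_zero_of_notMem _ hu]; simp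
  have hmono : Real.circleAverage (fun x => Real.log ‖g x‖) c s ≤ Real.circleAverage (fun x => Real.posLog ‖g x‖) c s := by
    apply Real.circleAverage_mono _ hint
    · intro x _; exact le_max_right _ _
    · apply MeromorphicOn.circleIntegrable_log_norm
      intro x hx
      rw [habs] at hx
      exact (hg x (sphere_subset_closedBall hx)).meromorphicAt
  have : Real.log ‖g c‖ ≤ Real.circleAverage (fun x => Real.posLog ‖g x‖) c s := by linarith
  exact max_le hnn this

open MeasureTheory Metric in
lemma posLog_area {g : ℂ → ℂ} {c : ℂ} {r : ℝ} (hr : 0 < r)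
    (hg : AnalyticOnNhd ℂ g (ball c r)) :
    ENNReal.ofReal (Real.posLog ‖g c‖) * volume (ball c r) ≤
      ∫⁻ x in ball c r, ENNReal.ofReal (Real.posLog ‖g x‖) := by
  have hmeasB : MeasurableSet (ball c r) := measurableSet_ball
  set ψ : ℂ → ENNReal := (ball c r).indicator (fun x => ENNReal.ofReal (Real.posLog ‖g x‖)) with hψ
  set χ : ℂ → ENNReal := (ball c r).indicator (fun x => ENNReal.ofReal (Real.posLog ‖g c‖)) with hχ
  have hψm : Measurable ψ := by
    apply measurable_of_isOpen
    intro t ht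
    have hc : ContinuousOn (fun x => ENNReal.ofReal (Real.posLog ‖g x‖)) (ball c r) :=
      ENNReal.continuous_ofReal.comp_continuousOn
        (Real.continuous_posLog.comp_continuousOn hg.continuousOn.norm)
    have h1 := (hc.isOpen_inter_preimage isOpen_ball ht).measurableSet
    rw [hψ, Set.indicator_preimage]
    unfold Set.ite
    apply MeasurableSet.union
    · rwa [Set.inter_comm]
    · exact (measurable_const ht.measurableSet).diff hmeasB
  have hχm : Measurable χ := measurable_const.indicator hmeasB
  have e1 : ENNReal.ofReal (Real.posLog ‖g c‖) * volume (ball c r) = ∫⁻ x, χ x := by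
    rw [hχ, lintegral_indicator hmeasB]; simp
  have e2 : ∫⁻ x in ball c r, ENNReal.ofReal (Real.posLog ‖g x‖) = ∫⁻ x, ψ x := by
    rw [hψ, lintegral_indicator hmeasB]
  have key : ∀ f : ℂ → ENNReal, Measurable f → ∫⁻ x, f x = ∫⁻ s in Set.Ioi (0:ℝ),
      ENNReal.ofReal s * ∫⁻ θ in Set.Ioo (-Real.pi) Real.pi, f (circleMap c s θ) := by
    intro f hf
    rw [← lintegral_add_right_eq_self f c, ← Complex.lintegral_comp_polarCoord_symm, polarCoord_target,
      Measure.volume_eq_prod, ← Measure.prod_restrict, lintegral_prod]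
    · apply lintegral_congr
      intro s
      rw [← lintegral_const_mul]
      · apply lintegral_congr
        intro θ
        simp only [smul_eq_mul]
        congr 2
        simp [circleMap, Complex.polarCoord_symm_apply, Complex.exp_mul_I]
        ring
      · apply hf.comp (continuous_circleMap c s).measurable
    · apply Measurable.aemeasurable
      simp only [smul_eq_mul]
      apply Measurable.mul
      · fun_prop
      · apply hf.comp
        apply Measurable.add_const
        have : (fun p : ℝ × ℝ => Complex.polarCoord.symm p) = fun p : ℝ × ℝ => (p.1 : ℂ) * (Real.cos p.2 + Real.sin p.2 * Complex.I) := by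
          ext p; exact Complex.polarCoord_symm_apply p
        change Measurable (fun p : ℝ × ℝ => Complex.polarCoord.symm p)
        rw [this]
        fun_prop
  rw [e1, e2, key _ hχm, key _ hψm]
  apply setLIntegral_mono' measurableSet_Ioi
  intro s hs
  gcongr ENNReal.ofReal s * ?_
  simp only [Set.mem_Ioi] at hs
  by_cases hsr : s < r
  · have hmem : ∀ θ, circleMap c s θ ∈ ball c r := by
      intro θ
      rw [mem_ball, dist_eq_norm]; simp [circleMap, abs_of_pos hs, hsr]
    simp only [hχ, hψ, Set.indicator_of_mem (hmem _)]
    have hsub : closedBall c s ⊆ ball c r := closedBall_subset_ball hsr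
    have h1 := posLog_circle hs (hg.mono hsub)
    have hcont : Continuous (fun θ : ℝ => Real.posLog ‖g (circleMap c s θ)‖) := by
      apply Real.continuous_posLog.comp
      apply Continuous.norm
      exact hg.continuousOn.comp_continuous (continuous_circleMap c s) hmem
    rw [← ofReal_integral_eq_lintegral_ofReal, ← ofReal_integral_eq_lintegral_ofReal]
    · apply ENNReal.ofReal_le_ofReal
      have h2 := Real.circleAverage_eq_integral_add (f := fun x => Real.posLog ‖g x‖) (c := c) (R := s) (-Real.pi)
      rw [h2, smul_eq_mul, intervalIntegral.integral_comp_add_right (fun θ => Real.posLog ‖g (circleMap c s θ)‖)] at h1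
      have e3 : (0:ℝ) + -Real.pi = -Real.pi := by ring
      have e4 : 2 * Real.pi + -Real.pi = Real.pi := by ring
      rw [e3, e4, intervalIntegral.integral_of_le (by linarith [Real.pi_pos]), integral_Ioc_eq_integral_Ioo] at h1
      rw [inv_mul_eq_div, le_div_iff₀ (by positivity)] at h1
      rw [integral_const]
      simp only [measureReal_restrict_apply_univ, Real.volume_real_Ioo, smul_eq_mul]
      rw [max_eq_left (by linarith [Real.pi_pos])]
      linarith
    · exact (hcont.integrableOn_Icc (a := -Real.pi) (b := Real.pi)).mono_set Set.Ioo_subset_Icc_self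
    · exact Filter.Eventually.of_forall fun _ => Real.posLog_nonneg
    · exact integrableOn_const (by simp)
    · exact Filter.Eventually.of_forall fun _ => Real.posLog_nonneg
  · have : ∀ θ, circleMap c s θ ∉ ball c r := by
      intro θ
      rw [mem_ball, dist_eq_norm]; simp [circleMap, abs_of_pos hs]; linarith
    simp [hχ, this]

open MeasureTheory Metric Filter Topology in
lemma hartogs_lemma {g : ℕ → ℂ → ℂ} {R A : ℝ} (hR : 0 < R) (hA : 1 < A)
    (hg : ∀ n, DifferentiableOn ℂ (g n) (ball 0 R))
    (hgA : ∀ n, ∀ x ∈ ball (0:ℂ) R, ‖g n x‖ ≤ A ^ n)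
    (hgC : ∀ x ∈ ball (0:ℂ) R, ∃ C : ℝ, ∀ n, ‖g n x‖ ≤ C) :
    ∃ C : ℝ, ∀ n, ∀ x ∈ ball (0:ℂ) (R/2), ‖g n x‖ ≤ C * 2 ^ n := by
  -- bad sets
  set bad : ℕ → Set ℂ := fun N => ball 0 R ∩ ⋃ n, {x ∈ ball (0:ℂ) R | (N:ℝ) < ‖g n x‖} with hbad
  have hbadm : ∀ N, MeasurableSet (bad N) := by
    intro N
    apply measurableSet_ball.inter
    apply MeasurableSet.iUnion
    intro n
    have := (hg n).continuousOn.norm.isOpen_inter_preimage isOpen_ball (isOpen_Ioi (a := (N:ℝ)))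
    exact this.measurableSet
  have hlog : 0 < Real.log A := Real.log_pos hA
  have hlim : Tendsto (volume ∘ bad) atTop (𝓝 (volume (⋂ N, bad N))) := by
    apply tendsto_measure_iInter_atTop
    · exact fun N => (hbadm N).nullMeasurableSet
    · intro N M hNM x hx
      simp only [hbad, Set.mem_inter_iff, Set.mem_iUnion, Set.mem_ofPred_eq] at hx ⊢
      obtain ⟨h1, n, h2, h3⟩ := hx
      exact ⟨h1, n, h2, lt_of_le_of_lt (by exact_mod_cast hNM) h3⟩
    · exact ⟨0, ne_of_lt (lt_of_le_of_lt (measure_mono Set.inter_subset_left) measure_ball_lt_top)⟩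
  have hempty : (⋂ N, bad N) = ∅ := by
    ext x
    simp only [hbad, Set.mem_iInter, Set.mem_inter_iff, Set.mem_iUnion, Set.mem_ofPred_eq, Set.mem_empty_iff_false, iff_false]
    intro h
    obtain ⟨C, hC⟩ := hgC x (h 0).1
    obtain ⟨N, hN⟩ := exists_nat_gt C
    obtain ⟨_, n, _, h3⟩ := h N
    linarith [hC n]
  rw [hempty, measure_empty] at hlim
  have hvpos : 0 < volume (ball (0:ℂ) (R/2)) := measure_ball_pos _ _ (by positivity)
  set η : ENNReal := ENNReal.ofReal (Real.log 2 / Real.log A) * volume (ball (0:ℂ) (R/2)) with hη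
  have hηpos : 0 < η := by
    apply ENNReal.mul_pos _ hvpos.ne'
    have : 0 < Real.log 2 / Real.log A := div_pos (Real.log_pos (by norm_num)) hlog
    simp [this]
  obtain ⟨N, hN1, hN⟩ := ((eventually_ge_atTop 1).and (hlim.eventually (gt_mem_nhds hηpos))).exists
  simp only [Function.comp] at hN
  have hN1' : (1:ℝ) ≤ N := by exact_mod_cast hN1
  refine ⟨N, fun n x hx => ?_⟩
  have hsub : ball x (R/2) ⊆ ball 0 R := by
    intro y hy
    simp only [mem_ball] at *
    linarith [dist_triangle y x 0]
  have h1 := posLog_area (g := g n) (c := x) (r := R/2) (by positivity)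
    (((hg n).analyticOnNhd isOpen_ball).mono hsub)
  have hvol : volume (ball x (R/2)) = volume (ball (0:ℂ) (R/2)) := by
    rw [Complex.volume_ball, Complex.volume_ball]
  have h2 : ∫⁻ y in ball x (R/2), ENNReal.ofReal (Real.posLog ‖g n y‖) ≤
      ∫⁻ y in ball x (R/2), (ENNReal.ofReal (Real.log N) + (bad N).indicator (fun _ => ENNReal.ofReal (n * Real.log A)) y) := by
    apply setLIntegral_mono' measurableSet_ball
    intro y hy
    have hy' := hsub hy
    by_cases hb : y ∈ bad N
    · rw [Set.indicator_of_mem hb]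
      refine le_trans ?_ le_add_self
      apply ENNReal.ofReal_le_ofReal
      apply max_le (by positivity)
      by_cases hz : ‖g n y‖ = 0
      · rw [hz]; simp; positivity
      rw [← Real.log_pow]
      exact Real.log_le_log (lt_of_le_of_ne (norm_nonneg _) (Ne.symm hz)) (hgA n y hy')
    · refine le_trans ?_ le_self_add
      apply ENNReal.ofReal_le_ofReal
      have : ‖g n y‖ ≤ N := by
        by_contra hcon
        push Not at hcon
        exact hb ⟨hy', Set.mem_iUnion.2 ⟨n, hy', hcon⟩⟩
      apply max_le (Real.log_nonneg hN1')
      by_cases hz : ‖g n y‖ = 0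
      · rw [hz]; simp; exact Real.log_nonneg hN1'
      exact Real.log_le_log (lt_of_le_of_ne (norm_nonneg _) (Ne.symm hz)) this
  have h3 : ∫⁻ y in ball x (R/2), (ENNReal.ofReal (Real.log N) + (bad N).indicator (fun _ => ENNReal.ofReal (n * Real.log A)) y)
      ≤ (ENNReal.ofReal (Real.log N) + ENNReal.ofReal (n * Real.log 2)) * volume (ball (0:ℂ) (R/2)) := by
    rw [lintegral_add_left measurable_const, lintegral_indicator (hbadm N)]
    simp only [lintegral_const, Measure.restrict_apply MeasurableSet.univ, Set.univ_inter, hvol, add_mul]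
    refine add_le_add le_rfl ?_
    calc _ ≤ ENNReal.ofReal (n * Real.log A) * η := by
          gcongr
          refine le_trans ?_ hN.le
          exact le_trans (Measure.restrict_apply_le _ _) le_rfl
      _ = _ := by
          rw [hη, ← mul_assoc, ← ENNReal.ofReal_mul (by positivity)]
          congr 2
          field_simp
  have h4 := (h1.trans h2).trans h3
  rw [hvol, ENNReal.mul_le_mul_iff_left hvpos.ne' measure_ball_lt_top.ne, ← ENNReal.ofReal_add (Real.log_nonneg hN1') (by positivity),
    ENNReal.ofReal_le_ofReal_iff (by have := Real.log_nonneg hN1'; positivity)] at h4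
  have h5 : Real.log ‖g n x‖ ≤ Real.log N + n * Real.log 2 := le_trans (le_max_right _ _) h4
  by_cases hz : ‖g n x‖ = 0
  · rw [hz]; positivity
  rw [← Real.log_pow, ← Real.log_mul (by positivity) (by positivity)] at h5
  exact (Real.log_le_log_iff (lt_of_le_of_ne (norm_nonneg _) (Ne.symm hz)) (by positivity)).1 h5

section hartogs
open Metric Filter Topology

/-- Bound on `dslope` of a bounded holomorphic function. -/
lemma dslope_bound {f : ℂ → ℂ} {b : ℂ} {η C : ℝ} (hf : DifferentiableOn ℂ f (ball b η))
    (hC : ∀ z ∈ ball b η, ‖f z‖ ≤ C) : ∀ z ∈ ball b η, ‖dslope f b z‖ ≤ 2 * C / η := by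
  intro z hz
  have hb : b ∈ ball b η := mem_ball_self (pos_of_mem_ball hz)
  refine Complex.norm_dslope_le_div_of_mapsTo_ball hf ?_ hz
  intro y hy
  rw [mem_closedBall, dist_eq_norm]
  linarith [norm_sub_le (f y) (f b), hC y hy, hC b hb]

lemma dslope_diff {f : ℂ → ℂ} {b : ℂ} {η : ℝ} (hη : 0 < η) (hf : DifferentiableOn ℂ f (ball b η)) :
    DifferentiableOn ℂ (dslope f b) (ball b η) :=
  (Complex.differentiableOn_dslope (ball_mem_nhds b hη)).2 hf

lemma dslope_lip {f : ℂ → ℂ} {b : ℂ} {η C : ℝ} (hf : DifferentiableOn ℂ f (ball b η))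
    (hC : ∀ z ∈ ball b η, ‖f z‖ ≤ C) :
    ∀ z ∈ ball b η, ‖dslope f b z - deriv f b‖ ≤ 2 * (2 * C / η) / η * ‖z - b‖ := by
  intro z hz
  have hη := pos_of_mem_ball hz
  have h1 := dslope_bound (dslope_diff hη hf) (dslope_bound hf hC) z hz
  have h2 := sub_smul_dslope (dslope f b) b z
  rw [dslope_same] at h2
  rw [← h2, norm_smul, mul_comm]
  gcongr

lemma deriv_param {G : ℂ → ℂ → ℂ} {U : Set ℂ} (hU : IsOpen U) {b : ℂ} {η C : ℝ}
    (h1 : ∀ ζ ∈ U, DifferentiableOn ℂ (G ζ) (ball b η))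
    (h2 : ∀ ω ∈ ball b η, DifferentiableOn ℂ (fun ζ => G ζ ω) U)
    (hC : ∀ ζ ∈ U, ∀ ω ∈ ball b η, ‖G ζ ω‖ ≤ C) (hη : 0 < η) :
    DifferentiableOn ℂ (fun ζ => deriv (G ζ) b) U := by
  have hb : b ∈ ball b η := mem_ball_self hη
  have hloc : TendstoLocallyUniformlyOn (fun ω ζ => dslope (G ζ) b ω) (fun ζ => deriv (G ζ) b) (𝓝[≠] b) U := by
    apply TendstoUniformlyOn.tendstoLocallyUniformlyOn
    rw [Metric.tendstoUniformlyOn_iff]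
    intro ε hε
    have ht : Tendsto (fun ω : ℂ => 2 * (2 * C / η) / η * ‖ω - b‖) (𝓝[≠] b) (𝓝 0) := by
      apply tendsto_nhdsWithin_of_tendsto_nhds
      have : Continuous (fun ω : ℂ => 2 * (2 * C / η) / η * ‖ω - b‖) := by fun_prop
      simpa using this.tendsto b
    filter_upwards [ht.eventually (gt_mem_nhds hε), mem_nhdsWithin_of_mem_nhds (ball_mem_nhds b hη)] with ω h3 h4 ζ hζ
    rw [dist_comm, dist_eq_norm]
    exact lt_of_le_of_lt (dslope_lip (h1 ζ hζ) (hC ζ hζ) ω h4) h3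
  refine hloc.differentiableOn ?_ hU
  filter_upwards [self_mem_nhdsWithin, mem_nhdsWithin_of_mem_nhds (ball_mem_nhds b hη)] with ω h3 h4
  have : (fun ζ => dslope (G ζ) b ω) = fun ζ => (ω - b)⁻¹ * (G ζ ω - G ζ b) := by
    ext ζ
    rw [dslope_of_ne _ h3, slope_def_field, div_eq_inv_mul]
  rw [this]
  exact ((h2 ω h4).sub (h2 b hb)).const_mul _

lemma iter_param {G : ℂ → ℂ → ℂ} {U : Set ℂ} (hU : IsOpen U) {b : ℂ} {η C : ℝ} (hη : 0 < η)
    (h1 : ∀ ζ ∈ U, DifferentiableOn ℂ (G ζ) (ball b (2 * η)))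
    (h2 : ∀ ω ∈ ball b (2 * η), DifferentiableOn ℂ (fun ζ => G ζ ω) U)
    (hC : ∀ ζ ∈ U, ∀ ω ∈ ball b (2 * η), ‖G ζ ω‖ ≤ C) (n : ℕ) :
    (∀ ζ ∈ U, ∀ ω ∈ ball b η, ‖iteratedDeriv n (G ζ) ω‖ ≤ n.factorial * C / η ^ n) ∧
    ∀ ω ∈ ball b η, DifferentiableOn ℂ (fun ζ => iteratedDeriv n (G ζ) ω) U := by
  have hbd : ∀ n : ℕ, ∀ ζ ∈ U, ∀ ω ∈ ball b η, ‖iteratedDeriv n (G ζ) ω‖ ≤ n.factorial * C / η ^ n := by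
    intro n ζ hζ ω hω
    have hsub : closedBall ω η ⊆ ball b (2 * η) := by
      intro y hy
      simp only [mem_ball, mem_closedBall] at *
      linarith [dist_triangle y ω b]
    apply Complex.norm_iteratedDeriv_le_of_forall_mem_sphere_norm_le n hη
    · apply DifferentiableOn.diffContOnCl
      rw [closure_ball _ hη.ne']
      exact (h1 ζ hζ).mono hsub
    · intro z hz
      exact hC ζ hζ z (hsub (sphere_subset_closedBall hz))
  refine ⟨hbd n, ?_⟩
  induction n with
  | zero =>
    intro ω hω
    simpa using h2 ω (ball_subset_ball (by linarith) hω)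
  | succ n ih =>
    intro ω hω
    simp only [iteratedDeriv_succ]
    obtain ⟨ε, hε, hsub⟩ := Metric.isOpen_iff.1 (isOpen_ball (x := b) (ε := η)) ω hω
    refine deriv_param (η := ε) (C := n.factorial * C / η ^ n) hU ?_ (fun y hy => ih y (hsub hy)) (fun ζ hζ y hy => hbd n ζ hζ y (hsub hy)) hε
    intro ζ hζ
    have : AnalyticOnNhd ℂ (G ζ) (ball b (2 * η)) := (h1 ζ hζ).analyticOnNhd isOpen_ball
    refine ((this.iterated_deriv n).differentiableOn.mono
      (hsub.trans (ball_subset_ball (by linarith)))).congr ?_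
    intro y hy
    rw [iteratedDeriv_eq_iterate]

/-- Local boundedness of separately holomorphic functions (Hartogs). -/
lemma hartogs_bound {F : ℂ → ℂ → ℂ} {R : ℝ} (hR : 0 < R)
    (h1 : ∀ ω ∈ ball (0:ℂ) R, DifferentiableOn ℂ (fun ζ => F ζ ω) (ball 0 R))
    (h2 : ∀ ζ ∈ ball (0:ℂ) R, DifferentiableOn ℂ (F ζ) (ball 0 R)) :
    ∃ ρ > 0, ρ ≤ R ∧ ∃ C : ℝ, ∀ ζ ∈ ball (0:ℂ) ρ, ∀ ω ∈ ball (0:ℂ) ρ, ‖F ζ ω‖ ≤ C := by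
  -- Baire step
  set S : ℕ → Set ℂ := fun N => {ω ∈ closedBall (0:ℂ) (R/16) | ∀ ζ ∈ closedBall (0:ℂ) (R/2), ‖F ζ ω‖ ≤ N} with hS
  have hcl : ∀ N, IsClosed (S N ∪ (ball (0:ℂ) (R/16))ᶜ) := by
    intro N
    apply IsClosed.union _ isOpen_ball.isClosed_compl
    have : S N = closedBall (0:ℂ) (R/16) ∩ ⋂ ζ ∈ closedBall (0:ℂ) (R/2), (closedBall (0:ℂ) (R/16) ∩ (fun ω => ‖F ζ ω‖) ⁻¹' Set.Iic (N:ℝ)) := by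
      ext ω
      simp only [hS, Set.mem_ofPred_eq, Set.mem_inter_iff, Set.mem_iInter, Set.mem_preimage, Set.mem_Iic]
      exact ⟨fun h => ⟨h.1, fun ζ hζ => ⟨h.1, h.2 ζ hζ⟩⟩, fun h => ⟨h.1, fun ζ hζ => (h.2 ζ hζ).2⟩⟩
    rw [this]
    refine isClosed_closedBall.inter (isClosed_biInter fun ζ hζ => ?_)
    refine ContinuousOn.preimage_isClosed_of_isClosed ?_ isClosed_closedBall isClosed_Iic
    exact ((h2 ζ (closedBall_subset_ball (by linarith) hζ)).continuousOn.mono (closedBall_subset_ball (by linarith))).norm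
  have hcov : ⋃ N, (S N ∪ (ball (0:ℂ) (R/16))ᶜ) = Set.univ := by
    apply Set.eq_univ_of_forall
    intro ω
    rw [Set.mem_iUnion]
    by_cases hω : ω ∈ ball (0:ℂ) (R/16)
    · have hc := (h1 ω (ball_subset_ball (by linarith) hω)).continuousOn.mono
        (closedBall_subset_ball (x := (0:ℂ)) (show R/2 < R by linarith))
      obtain ⟨C, hC⟩ := (isCompact_closedBall (0:ℂ) (R/2)).exists_bound_of_continuousOn hc
      obtain ⟨N, hN⟩ := exists_nat_ge C
      exact ⟨N, Or.inl ⟨ball_subset_closedBall hω, fun ζ hζ => (hC ζ hζ).trans hN⟩⟩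
    · exact ⟨0, Or.inr hω⟩
  have hdense := dense_iUnion_interior_of_closed hcl hcov
  obtain ⟨b, hb, hb'⟩ := hdense.exists_mem_open (isOpen_ball (x := (0:ℂ)) (ε := R/16)) ⟨0, mem_ball_self (by positivity)⟩
  obtain ⟨N, hbN⟩ := Set.mem_iUnion.1 hb
  obtain ⟨ε, hε, hsub⟩ := Metric.isOpen_iff.1 (isOpen_interior.inter isOpen_ball) b ⟨hbN, hb'⟩
  have hFb : ∀ ζ ∈ ball (0:ℂ) (R/2), ∀ ω ∈ ball b ε, ‖F ζ ω‖ ≤ N := by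
    intro ζ hζ ω hω
    obtain ⟨h3, h4⟩ := hsub hω
    rcases interior_subset h3 with h5 | h5
    · exact h5.2 ζ (ball_subset_closedBall hζ)
    · exact absurd h4 h5
  have hsubR : ball b ε ⊆ ball 0 R := fun y hy => ball_subset_ball (by linarith) (hsub hy).2
  obtain ⟨η, hη⟩ : ∃ η, ε = 2 * η := ⟨ε / 2, by ring⟩
  subst hη
  have hη : 0 < η := by linarith
  have hball2 : ball (0:ℂ) (R/2) ⊆ ball 0 R := ball_subset_ball (by linarith)
  have hit := iter_param (G := F) (U := ball (0:ℂ) (R/2)) isOpen_ball hη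
    (fun ζ hζ => (h2 ζ (hball2 hζ)).mono hsubR)
    (fun ω hω => (h1 ω (hsubR hω)).mono hball2) hFb
  have hbb : b ∈ ball b η := mem_ball_self hη
  have hbR : closedBall b (R/2) ⊆ ball 0 R := by
    intro y hy
    simp only [mem_ball, mem_closedBall] at *
    linarith [dist_triangle y b 0]
  set c : ℕ → ℂ → ℂ := fun n ζ => ((n.factorial : ℂ))⁻¹ * iteratedDeriv n (F ζ) b with hc
  have hN1 : (0:ℝ) < N + 1 := by positivity
  set A : ℝ := max 2 (R / 2 / η) with hA
  have hfac : ∀ n : ℕ, (0:ℝ) < n.factorial := fun n => by exact_mod_cast n.factorial_pos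
  obtain ⟨C, hC⟩ := hartogs_lemma (g := fun n ζ => ((R/2 : ℝ):ℂ) ^ n / ((N + 1 : ℝ) : ℂ) * c n ζ) (R := R/2) (A := A) (by positivity)
    (lt_of_lt_of_le (by norm_num) (le_max_left _ _))
    (by
      intro n
      exact (((hit n).2 b hbb).const_mul _).const_mul _)
    (by
      intro n ζ hζ
      have h3 := (hit n).1 ζ hζ b hbb
      have h4 : ‖c n ζ‖ ≤ N / η ^ n := by
        simp only [hc, norm_mul, norm_inv, Complex.norm_natCast]
        rw [inv_mul_le_iff₀ (hfac n)]
        rw [← mul_div_assoc]; exact h3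
      rw [norm_mul, norm_div, norm_pow, Complex.norm_real, Complex.norm_real, Real.norm_of_nonneg hN1.le, Real.norm_of_nonneg (by positivity)]
      calc (R/2)^n / (N+1) * ‖c n ζ‖ ≤ (R/2)^n / (N+1) * ((N + 1) / η ^ n) := by
            gcongr; refine h4.trans ?_; gcongr; linarith
        _ = (R / 2 / η) ^ n := by
            rw [div_pow (R/2)]; field_simp
        _ ≤ A ^ n := by gcongr; exact le_max_right _ _)
    (by
      intro ζ hζ
      have hd := (h2 ζ (hball2 hζ)).mono hbR
      obtain ⟨C, hC⟩ := (isCompact_closedBall b (R/2)).exists_bound_of_continuousOn hd.continuousOn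
      refine ⟨C / (N + 1), fun n => ?_⟩
      have h3 := Complex.norm_iteratedDeriv_le_of_forall_mem_sphere_norm_le (c := b) (R := R/2) (C := C) (f := F ζ) n (by positivity)
        (by
          apply DifferentiableOn.diffContOnCl
          rwa [closure_ball _ (by positivity)]) (fun z hz => hC z (sphere_subset_closedBall hz))
      have h4 : ‖c n ζ‖ ≤ C / (R/2) ^ n := by
        simp only [hc, norm_mul, norm_inv, Complex.norm_natCast]
        rw [inv_mul_le_iff₀ (hfac n)]
        rw [← mul_div_assoc]; exact h3
      rw [norm_mul, norm_div, norm_pow, Complex.norm_real, Complex.norm_real, Real.norm_of_nonneg hN1.le, Real.norm_of_nonneg (by positivity)]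
      calc (R/2)^n / (N+1) * ‖c n ζ‖ ≤ (R/2)^n / (N+1) * (C / (R/2) ^ n) := by
            gcongr
        _ = C / (N+1) := by field_simp)
  refine ⟨R/16, by positivity, by linarith, (N + 1) * C * 2, ?_⟩
  intro ζ hζ ω hω
  have hζ4 : ζ ∈ ball (0:ℂ) (R/2/2) := ball_subset_ball (by linarith) hζ
  have hζ2 : ζ ∈ ball (0:ℂ) (R/2) := ball_subset_ball (by linarith) hζ
  have hωb : ‖ω - b‖ ≤ R / 8 := by
    rw [← dist_eq_norm]
    simp only [mem_ball] at *
    linarith [dist_triangle ω 0 b, dist_comm b 0]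
  have hs := Complex.hasSum_taylorSeries_on_ball ((h2 ζ (hball2 hζ2)).mono (ball_subset_closedBall.trans hbR))
    (z := ω) (by rw [mem_ball, dist_eq_norm]; linarith)
  have hterm : ∀ n : ℕ, ‖((n.factorial : ℂ))⁻¹ • (ω - b) ^ n • iteratedDeriv n (F ζ) b‖ ≤ (N + 1) * C * (1/2) ^ n := by
    intro n
    have h3 := hC n ζ hζ4
    rw [norm_mul, norm_div, norm_pow, Complex.norm_real, Complex.norm_real, Real.norm_of_nonneg hN1.le, Real.norm_of_nonneg (by positivity),
      div_mul_eq_mul_div, div_le_iff₀ hN1] at h3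
    have e : ((n.factorial : ℂ))⁻¹ • (ω - b) ^ n • iteratedDeriv n (F ζ) b = (ω - b) ^ n * c n ζ := by
      simp only [hc, smul_eq_mul]; ring
    rw [e, norm_mul, norm_pow]
    calc ‖ω - b‖ ^ n * ‖c n ζ‖ ≤ (R/8)^n * ‖c n ζ‖ := by gcongr
      _ = (1/4)^n * ((R/2)^n * ‖c n ζ‖) := by
          rw [← mul_assoc, ← mul_pow]; congr 2; ring
      _ ≤ (1/4)^n * (C * 2 ^ n * (N+1)) := by gcongr
      _ = (N + 1) * C * (((1/4) * 2) ^ n) := by rw [mul_pow]; ring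
      _ = _ := by norm_num
  have hg : HasSum (fun n : ℕ => ((N:ℝ) + 1) * C * (1/2) ^ n) ((N + 1) * C * 2) := hasSum_geometric_two.mul_left _
  rw [← hs.tsum_eq]
  exact tsum_of_norm_bounded hg hterm

/-- Mixed second difference quotients converge. -/
lemma second_diff {F : ℂ → ℂ → ℂ} {R : ℝ} (hR : 0 < R)
    (h1 : ∀ ω ∈ ball (0:ℂ) R, DifferentiableOn ℂ (fun ζ => F ζ ω) (ball 0 R))
    (h2 : ∀ ζ ∈ ball (0:ℂ) R, DifferentiableOn ℂ (F ζ) (ball 0 R)) :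
    Tendsto (fun h : ℂ => (F h (starRingEnd ℂ h) - F h 0 - F 0 (starRingEnd ℂ h) + F 0 0) / (h * starRingEnd ℂ h))
      (𝓝[≠] 0) (𝓝 (deriv (fun ζ => deriv (F ζ) 0) 0)) := by
  obtain ⟨ρ, hρ, hρR, C, hC⟩ := hartogs_bound hR h1 h2
  have hsub : ball (0:ℂ) ρ ⊆ ball 0 R := ball_subset_ball hρR
  have h0 : (0:ℂ) ∈ ball (0:ℂ) ρ := mem_ball_self hρ
  have h2' : ∀ ζ ∈ ball (0:ℂ) ρ, DifferentiableOn ℂ (F ζ) (ball 0 ρ) := fun ζ hζ => (h2 ζ (hsub hζ)).mono hsub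
  have h1' : ∀ ω ∈ ball (0:ℂ) ρ, DifferentiableOn ℂ (fun ζ => F ζ ω) (ball 0 ρ) := fun ζ hζ => (h1 ζ (hsub hζ)).mono hsub
  set P : ℂ → ℂ := fun ζ => deriv (F ζ) 0 with hP
  have hPd : DifferentiableOn ℂ P (ball 0 ρ) := deriv_param isOpen_ball h2' h1' hC hρ
  have hlim1 : Tendsto (dslope P 0) (𝓝[≠] 0) (𝓝 (deriv P 0)) := by
    have := ((dslope_diff hρ hPd).differentiableAt (ball_mem_nhds 0 hρ)).continuousAt.tendsto
    rw [dslope_same] at this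
    exact this.mono_left nhdsWithin_le_nhds
  set M : ℝ := 2 * (2 * C / ρ) / ρ with hM
  -- the error term
  set E : ℂ → ℂ → ℂ := fun ω ζ => ω⁻¹ * (F ζ ω - F ζ 0) - P ζ with hE
  have hEd : ∀ ω ∈ ball (0:ℂ) ρ, DifferentiableOn ℂ (E ω) (ball 0 ρ) := fun ω hω =>
    (((h1' ω hω).sub (h1' 0 h0)).const_mul _).sub hPd
  have hEb : ∀ ω ∈ ball (0:ℂ) ρ, ω ≠ 0 → ∀ ζ ∈ ball (0:ℂ) ρ, ‖E ω ζ‖ ≤ M * ‖ω‖ := by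
    intro ω hω hω0 ζ hζ
    have := dslope_lip (h2' ζ hζ) (hC ζ hζ) ω hω
    rw [dslope_of_ne _ hω0, slope_def_field, sub_zero, div_eq_inv_mul] at this
    exact this
  have hlim2 : Tendsto (fun h : ℂ => dslope (E (starRingEnd ℂ h)) 0 h) (𝓝[≠] 0) (𝓝 0) := by
    have ht : Tendsto (fun h : ℂ => 2 * (M * ‖h‖) / ρ) (𝓝[≠] 0) (𝓝 0) := by
      apply tendsto_nhdsWithin_of_tendsto_nhds
      have : Continuous (fun h : ℂ => 2 * (M * ‖h‖) / ρ) := by fun_prop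
      simpa using this.tendsto 0
    refine squeeze_zero_norm' ?_ ht
    filter_upwards [self_mem_nhdsWithin, mem_nhdsWithin_of_mem_nhds (ball_mem_nhds (0:ℂ) hρ)] with h h3 h4
    have h5 : starRingEnd ℂ h ∈ ball (0:ℂ) ρ := by simpa using h4
    have := dslope_bound (hEd _ h5) (hEb _ h5 (by simpa using h3)) h h4
    simpa using this
  have hfin := hlim1.add hlim2
  rw [add_zero] at hfin
  refine hfin.congr' ?_
  filter_upwards [self_mem_nhdsWithin] with h h3
  have h3' : h ≠ 0 := h3
  have h6 : starRingEnd ℂ h ≠ 0 := by simpa using h3'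
  rw [dslope_of_ne _ h3', dslope_of_ne _ h3', slope_def_field, slope_def_field]
  simp only [hE, sub_zero]
  field_simp
  ring

end hartogs

lemma nnd_fintype {s : Set ℂ} {K : ℂ → ℂ → ℂ} (h : IsNNDOn s K) {ι : Type*} [Fintype ι]
    (x : ι → ℂ) (hx : ∀ i, x i ∈ s) :
    Matrix.PosSemidef (Matrix.of fun i j : ι => K (x i) (x j)) := by
  have e := Fintype.equivFin ι
  have h1 := (h _ (x ∘ e.symm) (fun i => hx _)).submatrix e
  convert h1 using 1
  ext i j
  simp

lemma pd_nnd {s : Set ℂ} {K : ℂ → ℂ → ℂ} (h : IsPDOn s K) : IsNNDOn s K := by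
  intro p x hx
  have : Finite (Set.range x) := Set.finite_range x
  obtain ⟨n, ⟨e⟩⟩ := Finite.exists_equiv_fin (Set.range x)
  have h1 := (h n (fun i => (e.symm i : ℂ)) (by
    intro i
    obtain ⟨k, hk⟩ := (e.symm i).2
    rw [← hk]; exact hx k) (by
    intro i j hij
    exact e.symm.injective (Subtype.ext hij))).posSemidef.submatrix (fun i => e ⟨x i, Set.mem_range_self i⟩)
  convert h1 using 1
  ext i j
  simp

lemma nnd_add {s : Set ℂ} {K L : ℂ → ℂ → ℂ} (h : IsNNDOn s K) (h' : IsNNDOn s L) :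
    IsNNDOn s (fun z w => K z w + L z w) := by
  intro p x hx
  exact (h p x hx).add (h' p x hx)

lemma cross_psd {s : Set ℂ} {A B : ℂ → ℂ → ℂ} (hA : IsNNDOn s A) (hB : IsNNDOn s B) (p : ℕ)
    (x y : Fin p → ℂ) (hx : ∀ i, x i ∈ s) (hy : ∀ i, y i ∈ s) :
    Matrix.PosSemidef (Matrix.of fun i j : Fin p =>
      A (x i) (x j) * B (y i) (y j) + A (y i) (y j) * B (x i) (x j)
      - A (x i) (y j) * B (y i) (x j) - A (y i) (x j) * B (x i) (y j)) := by
  let u : Fin p × Bool → ℂ := fun q => if q.2 then y q.1 else x q.1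
  let v : Fin p × Bool → ℂ := fun q => if q.2 then x q.1 else y q.1
  have hu : ∀ q, u q ∈ s := by rintro ⟨i, _ | _⟩ <;> simp [u, hx, hy]
  have hv : ∀ q, v q ∈ s := by rintro ⟨i, _ | _⟩ <;> simp [v, hx, hy]
  have h0 : Matrix.PosSemidef (Matrix.of fun i j => A (u i) (u j) * B (v i) (v j)) :=
    (nnd_fintype hA u hu).hadamard (nnd_fintype hB v hv)
  have h := h0.conjTranspose_mul_mul_same
    (Matrix.of fun (q : Fin p × Bool) (j : Fin p) => if q.1 = j then (if q.2 then (-1:ℂ) else 1) else 0)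
  convert h using 1
  ext i j
  simp [Matrix.mul_apply, Fintype.sum_prod_type, u, v, ite_mul, mul_ite, apply_ite (starRingEnd ℂ)]
  ring

open Filter Topology in
lemma psd_limit {p : ℕ} {l : Filter ℂ} [l.NeBot] {M : ℂ → Matrix (Fin p) (Fin p) ℂ}
    {M₀ : Matrix (Fin p) (Fin p) ℂ} (hM : ∀ᶠ h in l, (M h).PosSemidef)
    (hlim : ∀ i j, Tendsto (fun h => M h i j) l (𝓝 (M₀ i j))) : M₀.PosSemidef := by
  rw [Matrix.posSemidef_iff_dotProduct_mulVec]
  constructor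
  · ext i j
    have h1 : Tendsto (fun h => star (M h j i)) l (𝓝 (star (M₀ j i))) := (hlim j i).star
    refine tendsto_nhds_unique_of_eventuallyEq h1 (hlim i j) ?_
    filter_upwards [hM] with h hh
    exact hh.1.apply i j
  · intro x
    have h1 : Tendsto (fun h => star x ⬝ᵥ (M h).mulVec x) l (𝓝 (star x ⬝ᵥ M₀.mulVec x)) := by
      simp only [dotProduct, Matrix.mulVec]
      refine tendsto_finsetSum _ fun i _ => ?_
      refine Tendsto.const_mul _ ?_
      refine tendsto_finsetSum _ fun j _ => ?_
      exact (hlim i j).mul_const _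
    refine ge_of_tendsto h1 ?_
    filter_upwards [hM] with h hh
    exact hh.dotProduct_mulVec_nonneg x

open Metric Filter Topology in
lemma sesq_limits {Ω : Set ℂ} (hΩ : IsOpen Ω) {K : ℂ → ℂ → ℂ} (hs : Sesq Ω K) {z w : ℂ}
    (hz : z ∈ Ω) (hw : w ∈ Ω) :
    Tendsto (fun h : ℂ => (K (z + h) (w + h) - K (z + h) w - K z (w + h) + K z w) / (h * conj' h))
      (𝓝[≠] 0) (𝓝 (D (Db K) z w)) ∧
    Tendsto (fun h : ℂ => (K (z + h) w - K z w) / h) (𝓝[≠] 0) (𝓝 (D K z w)) ∧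
    Tendsto (fun h : ℂ => (K z (w + h) - K z w) / conj' h) (𝓝[≠] 0) (𝓝 (Db K z w)) := by
  obtain ⟨r₁, hr₁, hb₁⟩ := Metric.isOpen_iff.1 hΩ z hz
  obtain ⟨r₂, hr₂, hb₂⟩ := Metric.isOpen_iff.1 hΩ w hw
  set R := min r₁ r₂ with hRdef
  have hR : 0 < R := lt_min hr₁ hr₂
  have hzm : ∀ ζ ∈ ball (0:ℂ) R, z + ζ ∈ Ω := by
    intro ζ hζ
    apply hb₁
    simp only [mem_ball, dist_zero_right] at hζ
    simpa [dist_eq_norm] using lt_of_lt_of_le hζ (min_le_left _ _)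
  have hwm : ∀ ζ ∈ ball (0:ℂ) R, w + ζ ∈ Ω := by
    intro ζ hζ
    apply hb₂
    simp only [mem_ball, dist_zero_right] at hζ
    simpa [dist_eq_norm] using lt_of_lt_of_le hζ (min_le_right _ _)
  have hcj : ∀ ζ ∈ ball (0:ℂ) R, conj' ζ ∈ ball (0:ℂ) R := by
    intro ζ hζ; simpa using hζ
  set F : ℂ → ℂ → ℂ := fun ζ ω => K (z + ζ) (w + conj' ω) with hF
  have h1 : ∀ ω ∈ ball (0:ℂ) R, DifferentiableOn ℂ (fun ζ => F ζ ω) (ball 0 R) := by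
    intro ω hω ζ hζ
    apply DifferentiableAt.differentiableWithinAt
    have := (hs.1 _ (hwm _ (hcj ω hω)) _ (hzm ζ hζ)).differentiableAt
    exact this.comp ζ (differentiableAt_id.const_add z)
  have hFc : ∀ ζ, F ζ = conj' ∘ (fun u => conj' (K (z + ζ) (w + u))) ∘ conj' := by
    intro ζ; ext ω; simp [hF]
  have h2 : ∀ ζ ∈ ball (0:ℂ) R, DifferentiableOn ℂ (F ζ) (ball 0 R) := by
    intro ζ hζ ω hω
    apply DifferentiableAt.differentiableWithinAt
    rw [hFc]
    have h3 := (hs.2 _ (hzm ζ hζ) _ (hwm _ (hcj ω hω))).differentiableAt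
    have h4 : DifferentiableAt ℂ (fun u => conj' (K (z + ζ) (w + u))) (conj' ω) :=
      h3.comp _ (differentiableAt_id.const_add w)
    simpa using h4.conj_conj
  have hder : ∀ ζ, deriv (F ζ) 0 = Db K (z + ζ) w := by
    intro ζ
    rw [hFc, deriv_conj_conj]
    simp only [Function.comp, map_zero, Db]
    rw [deriv_comp_const_add (fun u => conj' (K (z + ζ) u)) w 0, add_zero]
  have h0 : (0:ℂ) ∈ ball (0:ℂ) R := mem_ball_self hR
  refine ⟨?_, ?_, ?_⟩
  · have h := second_diff hR h1 h2
    simp only [hder] at h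
    rw [deriv_comp_const_add (fun u => Db K u w) z 0] at h
    simpa [hF, D] using h
  · have h := ((h1 0 h0).differentiableAt (ball_mem_nhds 0 hR)).hasDerivAt.tendsto_slope
    have e : deriv (fun ζ => F ζ 0) 0 = D K z w := by
      simp only [hF, map_zero, add_zero, D]
      rw [deriv_comp_const_add (fun u => K u w) z 0, add_zero]
    rw [e] at h
    refine h.congr fun t => ?_
    simp [slope_def_field, hF]
  · have h := ((h2 0 h0).differentiableAt (ball_mem_nhds 0 hR)).hasDerivAt.tendsto_slope
    rw [hder, add_zero] at h
    have hc : Tendsto (fun t : ℂ => conj' t) (𝓝[≠] 0) (𝓝[≠] 0) := by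
      apply tendsto_nhdsWithin_of_tendsto_nhds_of_eventually_within
      · apply tendsto_nhdsWithin_of_tendsto_nhds
        simpa using Complex.continuous_conj.tendsto 0
      · filter_upwards [self_mem_nhdsWithin] with t ht
        simpa using ht
    refine (h.comp hc).congr fun t => ?_
    simp [slope_def_field, hF]


/-- Monotonicity of the Gaussian curvature kernel: if `K₁, K₂` are sesqui-analytic
positive definite kernels on a domain `Ω ⊆ ℂ` with `K₁ − K₂` non-negative definite,
then `G_{K₁⁻¹} − G_{K₂⁻¹}` is non-negative definite, where
`G_{K⁻¹} = K ∂∂̄K − ∂K ∂̄K`. -/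
theorem stmt_11 (Ω : Set ℂ) (hΩo : IsOpen Ω) (hΩc : IsConnected Ω)
    (K₁ K₂ : ℂ → ℂ → ℂ) (hs₁ : Sesq Ω K₁) (hs₂ : Sesq Ω K₂)
    (hp₁ : IsPDOn Ω K₁) (hp₂ : IsPDOn Ω K₂)
    (hdom : IsNNDOn Ω (fun z w => K₁ z w - K₂ z w)) :
    IsNNDOn Ω (fun z w =>
      (K₁ z w * D (Db K₁) z w - D K₁ z w * Db K₁ z w) -
        (K₂ z w * D (Db K₂) z w - D K₂ z w * Db K₂ z w)) := by
  intro p x hx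
  have hA : IsNNDOn Ω (fun z w => K₁ z w + K₂ z w) := nnd_add (pd_nnd hp₁) (pd_nnd hp₂)
  refine psd_limit (l := nhdsWithin (0:ℂ) {0}ᶜ)
    (M := fun h => (1 / (2 * (h * conj' h))) • (Matrix.of fun i j : Fin p =>
      (K₁ (x i) (x j) + K₂ (x i) (x j)) *
        (K₁ (x i + h) (x j + h) - K₂ (x i + h) (x j + h)) +
      (K₁ (x i + h) (x j + h) + K₂ (x i + h) (x j + h)) *
        (K₁ (x i) (x j) - K₂ (x i) (x j)) -
      (K₁ (x i) (x j + h) + K₂ (x i) (x j + h)) *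
        (K₁ (x i + h) (x j) - K₂ (x i + h) (x j)) -
      (K₁ (x i + h) (x j) + K₂ (x i + h) (x j)) *
        (K₁ (x i) (x j + h) - K₂ (x i) (x j + h)))) ?_ ?_
  · have hev : ∀ᶠ h in nhdsWithin (0:ℂ) {0}ᶜ, ∀ i, x i + h ∈ Ω := by
      rw [Filter.eventually_all]
      intro i
      apply Filter.Tendsto.eventually_mem (f := fun h => x i + h) (s := Ω) (l₂ := nhds (x i))
      · apply tendsto_nhdsWithin_of_tendsto_nhds
        have : Continuous (fun h : ℂ => x i + h) := by fun_prop
        simpa using this.tendsto 0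
      · exact hΩo.mem_nhds (hx i)
    filter_upwards [hev] with h hh
    apply Matrix.PosSemidef.smul (cross_psd hA hdom p x (fun i => x i + h) hx hh)
    rw [Complex.mul_conj]
    have : (0:ℝ) ≤ 1 / (2 * Complex.normSq h) := by
      have := Complex.normSq_nonneg h
      positivity
    exact_mod_cast this
  · intro i j
    obtain ⟨a1, a2, a3⟩ := sesq_limits hΩo hs₁ (hx i) (hx j)
    obtain ⟨b1, b2, b3⟩ := sesq_limits hΩo hs₂ (hx i) (hx j)
    have hlim := ((((a1.const_mul (K₁ (x i) (x j))).sub (a2.mul a3)).sub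
      ((b1.const_mul (K₂ (x i) (x j))).sub (b2.mul b3))))
    refine hlim.congr' ?_
    filter_upwards [self_mem_nhdsWithin] with h hh
    have hh' : h ≠ 0 := hh
    have hh2 : conj' h ≠ 0 := by simpa using hh'
    simp only [Matrix.smul_apply, Matrix.of_apply, smul_eq_mul]
    field_simp
    ring
end

section
/- Let f : Ω × Ω → ℂ be holomorphic, Ω ⊆ ℂᵐ a domain, with f vanishing on the diagonal Δ and all first-order derivatives ∂f/∂ζⱼ, j = 1,…,m, vanishing on Δ. Then for each z₀ ∈ Ω there is a neighbourhood Ω₀ of z₀ and holomorphic functions f_{ij}, 1 ≤ i ≤ j ≤ m, on Ω₀ × Ω₀ with f(z,ζ) = Σ_{1≤i≤j≤m} (zᵢ−ζᵢ)(zⱼ−ζⱼ)·f_{ij}(z,ζ). -/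
open MeasureTheory Filter Topology Set in
/-- Averaging an analytic function over a path of contractions fixing the centre. -/
theorem aux_integral_analytic {E : Type*} [NormedAddCommGroup E] [NormedSpace ℂ E]
    (A : ℝ → E →L[ℂ] E) (hA : Continuous A) (hA1 : ∀ t ∈ Icc (0:ℝ) 1, ‖A t‖ ≤ 1)
    (x0 : E) (hx0 : ∀ t, A t x0 = x0) (H : E → ℂ) (hH : AnalyticAt ℂ H x0) :
    AnalyticAt ℂ (fun x => ∫ t in (0:ℝ)..1, H (A t x)) x0 := by
  obtain ⟨p, r, hp⟩ := hH
  have hc : ∀ n, Continuous (fun t => (p n).compContinuousLinearMap (fun _ => A t)) := by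
    intro n
    have h1 : Continuous (fun t => ContinuousMultilinearMap.compContinuousLinearMapContinuousMultilinear
      ℂ (fun _ : Fin n => E) (fun _ : Fin n => E) ℂ (fun _ => A t)) :=
      (ContinuousMultilinearMap.cont _).comp (continuous_pi fun _ => hA)
    exact h1.clm_apply continuous_const
  have hb : ∀ n, ∀ t ∈ Icc (0:ℝ) 1, ‖(p n).compContinuousLinearMap (fun _ => A t)‖ ≤ ‖p n‖ := by
    intro n t ht
    refine (ContinuousMultilinearMap.norm_compContinuousLinearMap_le _ _).trans ?_
    refine mul_le_of_le_one_right (norm_nonneg _) ?_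
    exact Finset.prod_le_one (fun _ _ => norm_nonneg _) (fun _ _ => hA1 t ht)
  have hI : uIoc (0:ℝ) 1 ⊆ Icc 0 1 := by
    rw [uIoc_of_le zero_le_one]; exact Ioc_subset_Icc_self
  let q : FormalMultilinearSeries ℂ E ℂ := fun n =>
    ∫ t in (0:ℝ)..1, (p n).compContinuousLinearMap (fun _ => A t)
  have hq : ∀ n (y : E), q n (fun _ => y) = ∫ t in (0:ℝ)..1, p n (fun _ => A t y) := by
    intro n y
    have := (ContinuousMultilinearMap.apply ℂ (fun _ : Fin n => E) ℂ (fun _ => y)).intervalIntegral_comp_comm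
      ((hc n).intervalIntegrable (μ := volume) 0 1)
    exact this.symm
  refine ⟨q, r, ?_, hp.r_pos, ?_⟩
  · refine hp.r_le.trans (FormalMultilinearSeries.radius_le_of_le fun n => ?_)
    have := intervalIntegral.norm_integral_le_of_norm_le_const (a := (0:ℝ)) (b := 1)
      (f := fun t => (p n).compContinuousLinearMap (fun _ => A t)) (C := ‖p n‖)
      (fun t ht => hb n t (hI ht))
    simpa using this
  · intro y hy
    simp only [hq]
    have hyr : y ∈ Metric.eball (0:E) p.radius := Metric.eball_subset_eball hp.r_le hy
    have hs : Summable fun n => ‖p n‖ * ‖y‖ ^ n := by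
      have := p.summable_norm_mul_pow (r := ‖y‖₊) (by simpa [edist_zero_right, enorm_eq_nnnorm] using hyr)
      simpa using this
    apply intervalIntegral.hasSum_integral_of_dominated_convergence (fun n _ => ‖p n‖ * ‖y‖ ^ n)
    · intro n
      have : Continuous fun t => p n (fun _ => A t y) :=
        (p n).cont.comp (continuous_pi fun _ => hA.clm_apply continuous_const)
      exact this.aestronglyMeasurable
    · intro n
      refine ae_of_all _ fun t ht => ?_
      have h1 := ((p n).compContinuousLinearMap (fun _ => A t)).le_opNorm (fun _ => y)
      simp only [Finset.prod_const, Finset.card_univ, Fintype.card_fin] at h1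
      exact h1.trans (mul_le_mul_of_nonneg_right (hb n t (hI ht)) (by positivity))
    · exact ae_of_all _ fun t _ => hs
    · exact intervalIntegrable_const
    · refine ae_of_all _ fun t ht => ?_
      have : A t (x0 + y) = x0 + A t y := by rw [map_add, hx0]
      rw [this]
      apply hp.hasSum
      have hle : ‖A t y‖ ≤ ‖y‖ := (A t).le_of_opNorm_le (hA1 t (hI ht)) y |>.trans (by simp)
      rw [mem_eball_zero_iff] at hy ⊢
      refine lt_of_le_of_lt ?_ hy
      exact enorm_le_iff_norm_le.2 hle

/-- The segment map `(z, ζ) ↦ (z, z + t (ζ - z))`. -/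
noncomputable def segMap (V : Type*) [NormedAddCommGroup V] [NormedSpace ℂ V] (t : ℝ) :
    V × V →L[ℂ] V × V :=
  (ContinuousLinearMap.inl ℂ V V + ContinuousLinearMap.inr ℂ V V).comp (ContinuousLinearMap.fst ℂ V V)
    + (t : ℂ) • (ContinuousLinearMap.inr ℂ V V).comp
      (ContinuousLinearMap.snd ℂ V V - ContinuousLinearMap.fst ℂ V V)

theorem segMap_apply {V : Type*} [NormedAddCommGroup V] [NormedSpace ℂ V] (t : ℝ) (x : V × V) :
    segMap V t x = (x.1, x.1 + (t : ℂ) • (x.2 - x.1)) := by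
  simp [segMap]

theorem segMap_norm {V : Type*} [NormedAddCommGroup V] [NormedSpace ℂ V] (t : ℝ)
    (ht : t ∈ Set.Icc (0:ℝ) 1) : ‖segMap V t‖ ≤ 1 := by
  refine ContinuousLinearMap.opNorm_le_bound _ zero_le_one fun x => ?_
  rw [segMap_apply, one_mul, Prod.norm_def]
  refine max_le (norm_fst_le x) ?_
  have : x.1 + (t : ℂ) • (x.2 - x.1) = ((1 - t : ℝ) : ℂ) • x.1 + (t : ℂ) • x.2 := by
    push_cast; module
  simp only [this]
  refine (norm_add_le _ _).trans ?_
  rw [norm_smul, norm_smul, Complex.norm_real, Complex.norm_real, Real.norm_of_nonneg ht.1,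
    Real.norm_of_nonneg (sub_nonneg.2 ht.2)]
  have h1 := mul_le_mul_of_nonneg_left (norm_fst_le x) (sub_nonneg.2 ht.2)
  have h2 := mul_le_mul_of_nonneg_left (norm_snd_le x) ht.1
  linarith

theorem segMap_continuous (V : Type*) [NormedAddCommGroup V] [NormedSpace ℂ V] :
    Continuous (segMap V) := by
  unfold segMap
  exact continuous_const.add (Complex.continuous_ofReal.smul continuous_const)

open MeasureTheory Filter Topology Set in
/-- Hadamard's lemma with parameters, relative to the diagonal, coordinate-free form. -/
theorem aux_hadamard_abs {V : Type*} [NormedAddCommGroup V] [NormedSpace ℂ V]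
    (f : V × V → ℂ) (z0 : V) (hf : AnalyticAt ℂ f (z0, z0)) :
    (∀ v, AnalyticAt ℂ (fun x => ∫ t in (0:ℝ)..1, fderiv ℂ f (segMap V t x) (0, v)) (z0, z0)) ∧
    (∀ v z, ∫ t in (0:ℝ)..1, fderiv ℂ f (segMap V t (z, z)) (0, v) = fderiv ℂ f (z, z) (0, v)) ∧
    ∀ᶠ x in 𝓝 (z0, z0),
      (∀ v, IntervalIntegrable (fun t : ℝ => fderiv ℂ f (segMap V t x) (0, v)) volume 0 1) ∧
      ∫ t in (0:ℝ)..1, fderiv ℂ f (segMap V t x) (0, x.2 - x.1) = f x - f (x.1, x.1) := by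
  have hfix : ∀ t (z : V), segMap V t (z, z) = (z, z) := by
    intro t z; simp [segMap_apply]
  refine ⟨?_, ?_, ?_⟩
  · intro v
    have hG : AnalyticAt ℂ (fun x => fderiv ℂ f x (0, v)) (z0, z0) :=
      ((ContinuousLinearMap.apply ℂ ℂ ((0 : V), v)).analyticAt _).comp hf.fderiv
    exact aux_integral_analytic (segMap V) (segMap_continuous _)
      (fun t ht => segMap_norm t ht) (z0, z0) (fun t => hfix t z0) _ hG
  · intro v z
    simp [hfix]
  · obtain ⟨r, hr, hB⟩ := Metric.eventually_nhds_iff_ball.1 hf.eventually_analyticAt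
    filter_upwards [Metric.ball_mem_nhds _ hr] with x hx
    have hmem : ∀ t ∈ Icc (0:ℝ) 1, segMap V t x ∈ Metric.ball (z0, z0) r := by
      intro t ht
      rw [mem_ball_iff_norm] at hx ⊢
      have : segMap V t x - (z0, z0) = segMap V t (x - (z0, z0)) := by rw [map_sub, hfix]
      rw [this]
      exact ((segMap V t).le_of_opNorm_le (segMap_norm t ht) _ |>.trans (by simp)).trans_lt hx
    have hcont : ∀ v, ContinuousOn (fun t : ℝ => fderiv ℂ f (segMap V t x) v) (uIcc 0 1) := by
      intro v
      rw [uIcc_of_le zero_le_one]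
      intro t ht
      have h1 : ContinuousAt (fderiv ℂ f) (segMap V t x) := (hB _ (hmem t ht)).fderiv.continuousAt
      have h2 : ContinuousAt (fun t => segMap V t x) t :=
        ((segMap_continuous _).clm_apply continuous_const).continuousAt
      have h3 : ContinuousAt (fun t => fderiv ℂ f (segMap V t x)) t :=
        ContinuousAt.comp (f := fun t => segMap V t x) h1 h2
      exact (h3.clm_apply continuousAt_const).continuousWithinAt
    have hd : ∀ t ∈ uIcc (0:ℝ) 1, HasDerivAt (fun t : ℝ => f (segMap V t x))
        (fderiv ℂ f (segMap V t x) (0, x.2 - x.1)) t := by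
      intro t ht
      rw [uIcc_of_le zero_le_one] at ht
      have h1 := ((hB _ (hmem t ht)).differentiableAt.hasFDerivAt).restrictScalars ℝ
      have h2 : HasDerivAt (fun t => segMap V t x) (0, x.2 - x.1) t := by
        simp only [segMap_apply]
        refine (hasDerivAt_const t x.1).prodMk ?_
        have h4 : HasDerivAt (fun t : ℝ => (t : ℂ)) 1 t := Complex.ofRealCLM.hasDerivAt
        simpa using (h4.smul_const (x.2 - x.1)).const_add x.1
      exact h1.comp_hasDerivAt t h2
    refine ⟨fun v => (hcont _).intervalIntegrable, ?_⟩
    rw [intervalIntegral.integral_eq_sub_of_hasDerivAt hd (hcont _).intervalIntegrable]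
    simp [segMap_apply]

open MeasureTheory Filter Topology Set in
/-- Hadamard's lemma with parameters, relative to the diagonal. -/
theorem aux_hadamard (m : ℕ) (f : (Fin m → ℂ) × (Fin m → ℂ) → ℂ) (z0 : Fin m → ℂ)
    (hf : AnalyticAt ℂ f (z0, z0)) :
    ∃ h : Fin m → (Fin m → ℂ) × (Fin m → ℂ) → ℂ, (∀ j, AnalyticAt ℂ (h j) (z0, z0)) ∧
      (∀ j z, h j (z, z) = fderiv ℂ f (z, z) (0, Pi.single j 1)) ∧
      ∀ᶠ x in 𝓝 (z0, z0), f x = f (x.1, x.1) + ∑ j, (x.2 j - x.1 j) * h j x := by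
  obtain ⟨H1, H2, H3⟩ := aux_hadamard_abs f z0 hf
  refine ⟨fun j x => ∫ t in (0:ℝ)..1, fderiv ℂ f (segMap _ t x) (0, Pi.single j 1),
    fun j => H1 _, fun j z => H2 _ z, ?_⟩
  filter_upwards [H3] with x hx
  obtain ⟨hint, hftc⟩ := hx
  have hdec : ∀ L : (Fin m → ℂ) × (Fin m → ℂ) →L[ℂ] ℂ,
      L (0, x.2 - x.1) = ∑ j, (x.2 j - x.1 j) * L (0, Pi.single j 1) := by
    intro L
    have : ((0 : Fin m → ℂ), x.2 - x.1)
        = ∑ j, (x.2 j - x.1 j) • ((0 : Fin m → ℂ), (Pi.single j (1:ℂ) : Fin m → ℂ)) := by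
      refine Prod.ext ?_ ?_
      · simp [Prod.fst_sum]
      · simp only [Prod.snd_sum, Prod.smul_snd]
        exact pi_eq_sum_univ' (x.2 - x.1)
    rw [this, map_sum]
    simp only [map_smul, smul_eq_mul]
  simp only [hdec] at hftc
  rw [intervalIntegral.integral_finset_sum] at hftc
  · simp only [intervalIntegral.integral_const_mul] at hftc
    rw [hftc]; simp
  · intro j _
    exact (hint _).const_mul _

theorem aux_sum (m : ℕ) (w : Fin m → ℂ) (k : Fin m → Fin m → ℂ) :
    ∑ i, w i * ∑ j, w j * k i j = ∑ i, ∑ j ∈ Finset.Ici i,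
      w i * w j * (if i = j then k i i else k i j + k j i) := by
  have h1 : ∀ i, ∑ j ∈ Finset.Ici i, w i * w j * (if i = j then k i i else k i j + k j i)
      = ∑ j, ((if i ≤ j then w i * w j * k i j else 0) +
          (if i < j then w i * w j * k j i else 0)) := by
    intro i
    rw [← Finset.sum_filter_add_sum_filter_not Finset.univ (fun j => i ≤ j)]
    rw [Finset.sum_eq_zero (s := Finset.univ.filter fun j => ¬ i ≤ j), add_zero]
    · refine Finset.sum_congr (by ext; simp) fun j hj => ?_
      have hij : i ≤ j := by simpa using hj
      rcases hij.eq_or_lt with rfl | h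
      · simp
      · simp [hij, h, h.ne]; ring
    · intro j hj
      have hij : ¬ i ≤ j := by simpa using hj
      have hij' : ¬ i < j := fun h => hij h.le
      simp [hij, hij']
  simp only [h1, Finset.sum_add_distrib]
  rw [Finset.sum_comm (f := fun i j => if i < j then w i * w j * k j i else 0)]
  rw [← Finset.sum_add_distrib]
  refine Finset.sum_congr rfl fun i _ => ?_
  rw [← Finset.sum_add_distrib, Finset.mul_sum]
  refine Finset.sum_congr rfl fun j _ => ?_
  rcases le_or_gt i j with h | h
  · simp [h, h.not_gt]; ring
  · simp [h, h.not_ge]; ring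


/-- If `f` is holomorphic on `Ω × Ω`, `Ω ⊆ ℂᵐ` a domain, vanishes on the diagonal, and
all first-order derivatives `∂f/∂ζⱼ` vanish on the diagonal, then near any `(z₀, z₀)`
it can be written as `f(z,ζ) = Σ_{i≤j} (zᵢ − ζᵢ)(zⱼ − ζⱼ) f_{ij}(z,ζ)` with `f_{ij}`
holomorphic. -/
theorem stmt_16 (m : ℕ) (Ω : Set (Fin m → ℂ)) (hΩo : IsOpen Ω) (hΩc : IsConnected Ω)
    (f : (Fin m → ℂ) × (Fin m → ℂ) → ℂ) (hf : AnalyticOnNhd ℂ f (Ω ×ˢ Ω))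
    (hdiag : ∀ z ∈ Ω, f (z, z) = 0)
    (hdiag' : ∀ z ∈ Ω, ∀ j : Fin m,
      deriv (fun t => f (z, Function.update z j t)) (z j) = 0) :
    ∀ z₀ ∈ Ω, ∃ Ω₀ : Set (Fin m → ℂ), IsOpen Ω₀ ∧ z₀ ∈ Ω₀ ∧ Ω₀ ⊆ Ω ∧
      ∃ g : Fin m → Fin m → (Fin m → ℂ) × (Fin m → ℂ) → ℂ,
        (∀ i j, AnalyticOnNhd ℂ (g i j) (Ω₀ ×ˢ Ω₀)) ∧
        ∀ z ∈ Ω₀, ∀ ζ ∈ Ω₀,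
          f (z, ζ) = ∑ i : Fin m, ∑ j ∈ Finset.Ici i,
            (z i - ζ i) * (z j - ζ j) * g i j (z, ζ) := by
  intro z₀ hz₀
  have hf0 : AnalyticAt ℂ f (z₀, z₀) := hf _ ⟨hz₀, hz₀⟩
  obtain ⟨h, hh, hhd, hhe⟩ := aux_hadamard m f z₀ hf0
  choose k hk hkd hke using fun i => aux_hadamard m (h i) z₀ (hh i)
  have hh0 : ∀ z ∈ Ω, ∀ i, h i (z, z) = 0 := by
    intro z hz i
    rw [hhd, ← hdiag' z hz i]
    have h1 : HasFDerivAt f (fderiv ℂ f (z, z)) (z, Function.update z i (z i)) := by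
      rw [Function.update_eq_self]
      exact (hf (z, z) ⟨hz, hz⟩).differentiableAt.hasFDerivAt
    have h2 : HasDerivAt (fun t => (z, Function.update z i t)) (0, Pi.single i 1) (z i) :=
      (hasDerivAt_const _ _).prodMk (hasDerivAt_update z i (z i))
    exact (h1.comp_hasDerivAt (z i) h2).deriv.symm
  have hev := (hhe.and ((Filter.eventually_all.2 hke).and (Filter.eventually_all.2 fun i =>
    Filter.eventually_all.2 fun j => (hk i j).eventually_analyticAt)))
  obtain ⟨r, hr, hB⟩ := Metric.eventually_nhds_iff_ball.1 hev
  refine ⟨Metric.ball z₀ r ∩ Ω, Metric.isOpen_ball.inter hΩo, ⟨Metric.mem_ball_self hr, hz₀⟩,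
    Set.inter_subset_right,
    fun i j x => if i = j then k i i x else k i j x + k j i x, ?_, ?_⟩
  · rintro i j ⟨z, ζ⟩ ⟨hz, hζ⟩
    have hx := (hB (z, ζ) (by rw [← ball_prod_same]; exact ⟨hz.1, hζ.1⟩)).2.2
    by_cases hij : i = j
    · simpa only [hij, if_true] using hx j j
    · simp only [hij, if_false]
      exact (hx i j).add (hx j i)
  · intro z hz ζ hζ
    obtain ⟨e1, e2, -⟩ := hB (z, ζ) (by rw [← ball_prod_same]; exact ⟨hz.1, hζ.1⟩)
    have e3 : ∀ i, h i (z, ζ) = ∑ j, (ζ j - z j) * k i j (z, ζ) := by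
      intro i
      have := e2 i
      simp only [hh0 z hz.2, zero_add] at this
      exact this
    simp only [hdiag z hz.2, zero_add, e3] at e1
    rw [e1, aux_sum m (fun i => ζ i - z i) (fun i j => k i j (z, ζ))]
    refine Finset.sum_congr rfl fun i _ => Finset.sum_congr rfl fun j _ => ?_
    ring
end
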